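/- arXiv:2310.06416 — 11 statements merged into one kernel-verified Lean document; each statement's English description precedes it below -/
import Mathlib

section
/- Fix r > 0, x_0, x_R ∈ ℝ, t > 0 and s ∈ ℝ. Let p(x,t) = f_L(x) + e^{−rt}·( f_{N(x_0,t)}(x) − (f_{N(0,t)} * f_L)(x) ), where f_L(x) = √(r/2)·e^{−√(2r)·|x − x_R|}, f_{N(m,t)}(x) = (2πt)^{−1/2}·e^{−(x−m)²/(2t)}, and * denotes convolution (f*g)(x) = ∫_ℝ f(x−y)g(y) dy. Then ∫_ℝ p(x,t)·e^{i s x} dx = r·e^{i s x_R}/(r + s²/2) + (e^{i s x_0} − r·e^{i s x_R}/(r + s²/2))·e^{−(r + s²/2)·t}. -/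
open MeasureTheory

lemma aux_int_exp (f : ℝ → ℝ) (hf : Integrable f) (s : ℝ) :
    Integrable (fun x : ℝ => ((f x : ℝ) : ℂ) * Complex.exp (Complex.I * (s : ℂ) * (x : ℂ))) := by
  refine hf.ofReal.mul_bdd (c := 1) (by fun_prop) (Filter.Eventually.of_forall fun x => ?_)
  rw [Complex.norm_exp]
  simp

lemma aux_gauss (m t s : ℝ) (ht : 0 < t) (f : ℝ → ℝ)
    (hf : ∀ x, f x = 1 / Real.sqrt (2 * Real.pi * t) * Real.exp (-(x - m) ^ 2 / (2 * t))) :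
    Integrable f ∧ (∫ x : ℝ, ((f x : ℝ) : ℂ) * Complex.exp (Complex.I * (s : ℂ) * (x : ℂ))) =
      Complex.exp (Complex.I * (s : ℂ) * (m : ℂ)) * Complex.exp (-((s : ℂ) ^ 2 / 2) * (t : ℂ)) := by
  have hfe : f = ProbabilityTheory.gaussianPDFReal m (NNReal.mk t ht.le) := by
    funext x
    rw [hf, ProbabilityTheory.gaussianPDFReal_def]
    simp
  refine ⟨hfe ▸ ProbabilityTheory.integrable_gaussianPDFReal _ _, ?_⟩
  have h := ProbabilityTheory.charFun_gaussianReal (μ := m) (v := (NNReal.mk t ht.le)) s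
  rw [charFun_apply_real, ProbabilityTheory.integral_gaussianReal_eq_integral_smul
    (by intro h; exact ht.ne' (congrArg NNReal.toReal h))] at h
  rw [hfe, ← Complex.exp_add]
  convert h using 1
  · congr 1; funext x
    rw [Complex.real_smul]; congr 2; ring
  · congr 1
    simp
    ring

lemma aux_conv (f g : ℝ → ℝ) (hf : Integrable f) (hg : Integrable g) (s : ℝ) :
    Integrable (fun x => ∫ y, f (x - y) * g y) ∧
    (∫ x : ℝ, ((∫ y, f (x - y) * g y : ℝ) : ℂ) * Complex.exp (Complex.I * (s : ℂ) * (x : ℂ))) =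
    (∫ x : ℝ, ((f x : ℝ) : ℂ) * Complex.exp (Complex.I * (s : ℂ) * (x : ℂ))) *
    (∫ x : ℝ, ((g x : ℝ) : ℂ) * Complex.exp (Complex.I * (s : ℂ) * (x : ℂ))) := by
  constructor
  · have := Integrable.integrable_convolution (ContinuousLinearMap.mul ℝ ℝ) hg hf
    refine this.congr (Filter.Eventually.of_forall fun x => ?_)
    simp only [convolution_def, ContinuousLinearMap.mul_apply', mul_comm]
  · have := integral_convolution (ContinuousLinearMap.mul ℝ ℂ) (aux_int_exp g hg s)
      (aux_int_exp f hf s) (μ := volume) (ν := volume)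
    rw [ContinuousLinearMap.mul_apply'] at this
    rw [mul_comm (∫ x : ℝ, ((f x : ℝ) : ℂ) * Complex.exp (Complex.I * (s : ℂ) * (x : ℂ))), ← this]
    congr 1; funext x
    simp only [convolution_def, ContinuousLinearMap.mul_apply']
    rw [← integral_complex_ofReal, ← integral_mul_const]
    congr 1; funext y
    have : Complex.exp (Complex.I * s * x) = Complex.exp (Complex.I * s * y) *
      Complex.exp (Complex.I * s * ((x - y : ℝ) : ℂ)) := by
      rw [← Complex.exp_add]; congr 1; push_cast; ring
    rw [this]; push_cast; ring

lemma aux_laplace (r xR s : ℝ) (hr : 0 < r) (fL : ℝ → ℝ)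
    (hfL : ∀ x, fL x = Real.sqrt (r / 2) * Real.exp (-(Real.sqrt (2 * r)) * |x - xR|)) :
    Integrable fL ∧
    (∫ x : ℝ, ((fL x : ℝ) : ℂ) * Complex.exp (Complex.I * (s : ℂ) * (x : ℂ))) =
    (r : ℂ) * Complex.exp (Complex.I * (s : ℂ) * (xR : ℂ)) / ((r : ℂ) + (s : ℂ) ^ 2 / 2) := by
  obtain ⟨a, ha⟩ : ∃ a, a = Real.sqrt (2 * r) := ⟨_, rfl⟩
  have ha0 : 0 < a := by rw [ha]; positivity
  have hr2 : r = a ^ 2 / 2 := by rw [ha, Real.sq_sqrt (by positivity)]; ring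
  have hb : Real.sqrt (r / 2) = a / 2 := by
    rw [hr2, show a ^ 2 / 2 / 2 = (a / 2) ^ 2 by ring, Real.sqrt_sq (by positivity)]
  simp only [hb, ← ha] at hfL
  have key : ∀ s : ℝ, Integrable
      (fun x : ℝ => ((fL x : ℝ) : ℂ) * Complex.exp (Complex.I * (s : ℂ) * (x : ℂ))) ∧
    (∫ x : ℝ, ((fL x : ℝ) : ℂ) * Complex.exp (Complex.I * (s : ℂ) * (x : ℂ))) =
    (r : ℂ) * Complex.exp (Complex.I * (s : ℂ) * (xR : ℂ)) / ((r : ℂ) + (s : ℂ) ^ 2 / 2) := by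
    intro s
    have h1 : 0 < ((a : ℂ) + Complex.I * s).re := by simpa
    have h2 : (-(a : ℂ) + Complex.I * s).re < 0 := by simpa
    have e1 : Set.EqOn (fun x : ℝ => ((fL x : ℝ) : ℂ) * Complex.exp (Complex.I * (s : ℂ) * (x : ℂ)))
        (fun x : ℝ => ((a : ℂ) / 2 * Complex.exp (-a * xR)) *
          Complex.exp (((a : ℂ) + Complex.I * s) * x)) (Set.Iic xR) := by
      intro x hx
      simp only [hfL]
      rw [abs_of_nonpos (sub_nonpos.2 hx)]
      push_cast
      rw [mul_assoc, mul_assoc ((a : ℂ) / 2), ← Complex.exp_add, ← Complex.exp_add]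
      congr 2; ring
    have e2 : Set.EqOn (fun x : ℝ => ((fL x : ℝ) : ℂ) * Complex.exp (Complex.I * (s : ℂ) * (x : ℂ)))
        (fun x : ℝ => ((a : ℂ) / 2 * Complex.exp (a * xR)) *
          Complex.exp ((-(a : ℂ) + Complex.I * s) * x)) (Set.Ioi xR) := by
      intro x hx
      simp only [hfL]
      rw [abs_of_pos (sub_pos.2 hx)]
      push_cast
      rw [mul_assoc, mul_assoc ((a : ℂ) / 2), ← Complex.exp_add, ← Complex.exp_add]
      congr 2; ring
    have i1 := (integrableOn_congr_fun e1 measurableSet_Iic).2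
      ((integrableOn_exp_mul_complex_Iic h1 xR).const_mul _)
    have i2 := (integrableOn_congr_fun e2 measurableSet_Ioi).2
      ((integrableOn_exp_mul_complex_Ioi h2 xR).const_mul _)
    constructor
    · rw [← integrableOn_univ, ← Set.Iic_union_Ioi (a := xR)]
      exact i1.union i2
    · rw [← intervalIntegral.integral_Iic_add_Ioi i1 i2, setIntegral_congr_fun measurableSet_Iic e1,
        setIntegral_congr_fun measurableSet_Ioi e2, integral_const_mul, integral_const_mul,
        integral_exp_mul_complex_Iic h1, integral_exp_mul_complex_Ioi h2]
      have n1 : (a : ℂ) + Complex.I * s ≠ 0 := fun h => by rw [h] at h1; simp at h1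
      have n2 : -(a : ℂ) + Complex.I * s ≠ 0 := fun h => by rw [h] at h2; simp at h2
      have n3 : (r : ℂ) + (s : ℂ) ^ 2 / 2 = -(((a : ℂ) + Complex.I * s) * (-(a : ℂ) + Complex.I * s)) / 2 := by
        rw [hr2]; push_cast; ring_nf; rw [Complex.I_sq]; ring
      have x1 : Complex.exp (((a : ℂ) + Complex.I * s) * xR) = Complex.exp (a * xR) * Complex.exp (Complex.I * s * xR) := by
        rw [← Complex.exp_add]; congr 1; ring
      have x2 : Complex.exp ((-(a : ℂ) + Complex.I * s) * xR) = Complex.exp (-a * xR) * Complex.exp (Complex.I * s * xR) := by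
        rw [← Complex.exp_add]; congr 1; ring
      have x3 : Complex.exp (-a * xR) * Complex.exp (a * xR) = 1 := by
        rw [← Complex.exp_add]; simp
      rw [n3, x1, x2]
      generalize Complex.exp (-a * xR) = u at *
      generalize Complex.exp (a * xR) = v at *
      generalize Complex.exp (Complex.I * s * xR) = w at *
      rw [hr2]; push_cast
      trans (a : ℂ) / 2 * (u * v) * w * (1 / ((a : ℂ) + Complex.I * s) - 1 / (-(a : ℂ) + Complex.I * s))
      · ring
      · rw [x3]; field_simp; ring
  refine ⟨?_, (key s).2⟩
  have := (key 0).1.re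
  simpa using this



/-- The explicit density
`p(x,t) = f_L(x) + e^{-rt}·(f_{N(x0,t)}(x) - (f_{N(0,t)} * f_L)(x))`
of Brownian motion started at `x0` with Poissonian resetting at rate `r > 0`
to `xR` has Fourier transform
`φ_t(s) = r·e^{isxR}/(r + s²/2) + (e^{isx0} - r·e^{isxR}/(r + s²/2))·e^{-(r+s²/2)t}`. -/
theorem fourier_resetting_pdf (r x0 xR t s : ℝ) (hr : 0 < r) (ht : 0 < t)
    (fL fN0 fNx0 p : ℝ → ℝ)
    (hfL : ∀ x, fL x = Real.sqrt (r / 2) * Real.exp (-(Real.sqrt (2 * r)) * |x - xR|))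
    (hfN0 : ∀ x, fN0 x = 1 / Real.sqrt (2 * Real.pi * t) * Real.exp (-x ^ 2 / (2 * t)))
    (hfNx0 : ∀ x, fNx0 x =
      1 / Real.sqrt (2 * Real.pi * t) * Real.exp (-(x - x0) ^ 2 / (2 * t)))
    (hp : ∀ x, p x = fL x + Real.exp (-r * t) * (fNx0 x - ∫ y : ℝ, fN0 (x - y) * fL y)) :
    (∫ x : ℝ, ((p x : ℝ) : ℂ) * Complex.exp (Complex.I * (s : ℂ) * (x : ℂ))) =
      (r : ℂ) * Complex.exp (Complex.I * (s : ℂ) * (xR : ℂ)) /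
          ((r : ℂ) + (s : ℂ) ^ 2 / 2) +
        (Complex.exp (Complex.I * (s : ℂ) * (x0 : ℂ)) -
            (r : ℂ) * Complex.exp (Complex.I * (s : ℂ) * (xR : ℂ)) /
              ((r : ℂ) + (s : ℂ) ^ 2 / 2)) *
          Complex.exp (-((r : ℂ) + (s : ℂ) ^ 2 / 2) * (t : ℂ)) := by
  obtain ⟨iL, eL⟩ := aux_laplace r xR s hr fL hfL
  obtain ⟨i0, e0⟩ := aux_gauss 0 t s ht fN0 (by simpa using hfN0)
  obtain ⟨ix, ex⟩ := aux_gauss x0 t s ht fNx0 hfNx0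
  obtain ⟨ic, ec⟩ := aux_conv fN0 fL i0 iL s
  have hsplit : ∀ x : ℝ, ((p x : ℝ) : ℂ) * Complex.exp (Complex.I * (s : ℂ) * (x : ℂ)) =
      (fL x : ℂ) * Complex.exp (Complex.I * (s : ℂ) * (x : ℂ)) + Complex.exp (-r * t) *
      ((fNx0 x : ℂ) * Complex.exp (Complex.I * (s : ℂ) * (x : ℂ)) -
       ((∫ y : ℝ, fN0 (x - y) * fL y : ℝ) : ℂ) * Complex.exp (Complex.I * (s : ℂ) * (x : ℂ))) := by
    intro x
    rw [hp, Complex.ofReal_add, Complex.ofReal_mul, Complex.ofReal_sub, Complex.ofReal_exp,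
      Complex.ofReal_mul, Complex.ofReal_neg]
    ring
  have jL := aux_int_exp _ iL s
  have jx := aux_int_exp _ ix s
  have jc := aux_int_exp _ ic s
  simp_rw [hsplit]
  have jd : Integrable (fun x : ℝ => Complex.exp (-r * t) *
      ((fNx0 x : ℂ) * Complex.exp (Complex.I * (s : ℂ) * (x : ℂ)) -
       ((∫ y : ℝ, fN0 (x - y) * fL y : ℝ) : ℂ) * Complex.exp (Complex.I * (s : ℂ) * (x : ℂ)))) :=
    (jx.sub jc).const_mul _
  rw [integral_add jL jd, integral_const_mul, integral_sub jx jc,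
    eL, ex, ec, e0, eL]
  have : Complex.exp (-((r : ℂ) + (s : ℂ) ^ 2 / 2) * (t : ℂ)) =
      Complex.exp (-r * t) * Complex.exp (-((s : ℂ) ^ 2 / 2) * (t : ℂ)) := by
    rw [← Complex.exp_add]; congr 1; ring
  rw [this]
  simp
  ring
end

section
/- Fix r > 0, x_0, x_R ∈ ℝ and t > 0. Let p(x,t) = f_L(x) + e^{−rt}·( f_{N(x_0,t)}(x) − (f_{N(0,t)} * f_L)(x) ), where f_L(x) = √(r/2)·e^{−√(2r)·|x − x_R|}, f_{N(m,t)}(x) = (2πt)^{−1/2}·e^{−(x−m)²/(2t)}, and * denotes convolution. Then the first moment satisfies ∫_ℝ x·p(x,t) dx = x_R + e^{−rt}·(x_0 − x_R). -/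
open MeasureTheory

/-- Unit mass, finite first moment equal to `m`. -/
def HasMean (f : ℝ → ℝ) (m : ℝ) : Prop :=
  Integrable f ∧ Integrable (fun x => x * f x) ∧ (∫ x, f x) = 1 ∧ (∫ x, x * f x) = m

lemma HasMean.of_even {f : ℝ → ℝ} (h1 : Integrable f) (h2 : Integrable (fun x => x * f x))
    (h3 : (∫ x, f x) = 1) (he : ∀ x, f (-x) = f x) : HasMean f 0 := by
  refine ⟨h1, h2, h3, ?_⟩
  have h := integral_neg_eq_self (fun x : ℝ => x * f x) volume
  simp only [he, neg_mul, integral_neg] at h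
  linarith

lemma HasMean.shift {f : ℝ → ℝ} (h : HasMean f 0) (m : ℝ) :
    HasMean (fun x => f (x - m)) m := by
  obtain ⟨h1, h2, h3, h4⟩ := h
  have e : (fun x => x * f (x - m)) = fun x => (x - m) * f (x - m) + m * f (x - m) := by
    funext x; ring
  have i1 := h1.comp_sub_right m
  have i2 := h2.comp_sub_right m
  refine ⟨i1, ?_, ?_, ?_⟩
  · rw [e]; exact i2.add (i1.const_mul m)
  · rw [integral_sub_right_eq_self f m, h3]
  · rw [e, integral_add i2 (i1.const_mul m), integral_const_mul,
      integral_sub_right_eq_self f m, integral_sub_right_eq_self (fun x => x * f x) m, h3, h4]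
    ring

lemma HasMean.conv {f g : ℝ → ℝ} {a b : ℝ} (hf : HasMean f a) (hg : HasMean g b) :
    Integrable (fun x => x * ∫ y, g (x - y) * f y) ∧
    (∫ x, x * ∫ y, g (x - y) * f y) = a + b := by
  obtain ⟨f1, f2, f3, f4⟩ := hf
  obtain ⟨g1, g2, g3, g4⟩ := hg
  let L := ContinuousLinearMap.mul ℝ ℝ
  have e : (fun x => x * ∫ y, g (x - y) * f y) =ᵐ[volume]
      fun x => (convolution (fun x => x * f x) g L volume) x
        + (convolution f (fun x => x * g x) L volume) x := by
    filter_upwards [f2.ae_convolution_exists L g1, f1.ae_convolution_exists L g2] with x h1 h2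
    unfold convolution
    rw [← integral_add h1 h2, ← integral_const_mul]
    congr 1
    funext y
    simp only [L, ContinuousLinearMap.mul_apply']
    ring
  have i1 := f2.integrable_convolution L g1
  have i2 := f1.integrable_convolution L g2
  refine ⟨(i1.add i2).congr e.symm, ?_⟩
  rw [integral_congr_ae e, integral_add i1 i2, integral_convolution L f2 g1,
    integral_convolution L f1 g2, f3, f4, g3, g4]
  simp [L]

lemma integral_exp_abs {b : ℝ} (hb : 0 < b) : (∫ x : ℝ, Real.exp (-b * |x|)) = 2 / b := by
  rw [integral_comp_abs (f := fun x => Real.exp (-b * x)), integral_exp_mul_Ioi (by linarith)]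
  simp; field_simp

lemma integrable_exp_abs {b : ℝ} (hb : 0 < b) : Integrable (fun x : ℝ => Real.exp (-b * |x|)) := by
  apply Integrable.of_integral_ne_zero
  rw [integral_exp_abs hb]; positivity

lemma hasMean_laplace {r : ℝ} (hr : 0 < r) :
    HasMean (fun x => Real.sqrt (r / 2) * Real.exp (-(Real.sqrt (2 * r)) * |x|)) 0 := by
  have hb : 0 < Real.sqrt (2 * r) := Real.sqrt_pos.2 (by linarith)
  have hc : Real.sqrt (r / 2) = Real.sqrt (2 * r) / 2 := by
    rw [show r / 2 = 2 * r / 2 ^ 2 by ring, Real.sqrt_div (by linarith),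
      Real.sqrt_sq (by norm_num)]
  rw [hc]
  generalize Real.sqrt (2 * r) = b at hb
  apply HasMean.of_even
  · exact (integrable_exp_abs hb).const_mul _
  · refine ((integrable_exp_abs (half_pos hb))).mono' (by fun_prop) ?_
    filter_upwards with x
    rw [Real.norm_eq_abs, abs_mul, abs_mul, abs_of_pos (Real.exp_pos _), abs_of_pos (half_pos hb)]
    have h1 : b / 2 * |x| ≤ Real.exp (b / 2 * |x|) := by
      linarith [Real.add_one_le_exp (b / 2 * |x|)]
    have h2 : Real.exp (-(b / 2) * |x|) = Real.exp (b / 2 * |x|) * Real.exp (-b * |x|) := by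
      rw [← Real.exp_add]; congr 1; ring
    rw [h2]
    calc _ = (b / 2 * |x|) * Real.exp (-b * |x|) := by ring
      _ ≤ _ := by gcongr
  · rw [integral_const_mul, integral_exp_abs hb]; field_simp
  · intro x; simp

lemma hasMean_gauss {t : ℝ} (ht : 0 < t) :
    HasMean (fun x => 1 / Real.sqrt (2 * Real.pi * t) * Real.exp (-x ^ 2 / (2 * t))) 0 := by
  have e : ∀ x : ℝ, -x ^ 2 / (2 * t) = -(1 / (2 * t)) * x ^ 2 := by intro x; ring
  have hb : 0 < 1 / (2 * t) := by positivity
  simp only [e]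
  apply HasMean.of_even
  · exact (integrable_exp_neg_mul_sq hb).const_mul _
  · refine ((integrable_mul_exp_neg_mul_sq hb).const_mul
      (1 / Real.sqrt (2 * Real.pi * t))).congr ?_
    filter_upwards with x
    ring
  · rw [integral_const_mul, integral_gaussian,
      show Real.pi / (1 / (2 * t)) = 2 * Real.pi * t by field_simp]
    have : 0 < Real.sqrt (2 * Real.pi * t) := Real.sqrt_pos.2 (by positivity)
    field_simp
  · intro x; simp


/-- The mean of Brownian motion started at `x0` with Poissonian resetting at
rate `r > 0` to `xR` equals `xR + e^{-rt}·(x0 - xR)`, computed from the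
explicit density `p(x,t)`. -/
theorem mean_resetting (r x0 xR t : ℝ) (hr : 0 < r) (ht : 0 < t)
    (fL fN0 fNx0 p : ℝ → ℝ)
    (hfL : ∀ x, fL x = Real.sqrt (r / 2) * Real.exp (-(Real.sqrt (2 * r)) * |x - xR|))
    (hfN0 : ∀ x, fN0 x = 1 / Real.sqrt (2 * Real.pi * t) * Real.exp (-x ^ 2 / (2 * t)))
    (hfNx0 : ∀ x, fNx0 x =
      1 / Real.sqrt (2 * Real.pi * t) * Real.exp (-(x - x0) ^ 2 / (2 * t)))
    (hp : ∀ x, p x = fL x + Real.exp (-r * t) * (fNx0 x - ∫ y : ℝ, fN0 (x - y) * fL y)) :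
    (∫ x : ℝ, x * p x) = xR + Real.exp (-r * t) * (x0 - xR) := by

  have hL : HasMean fL xR := by
    rw [funext hfL]; exact (hasMean_laplace hr).shift xR
  have h0 : HasMean fN0 0 := by
    rw [funext hfN0]; exact hasMean_gauss ht
  have hx : HasMean fNx0 x0 := by
    rw [funext hfNx0]; exact (hasMean_gauss ht).shift x0
  obtain ⟨c1, c2⟩ := hL.conv h0
  have e : (fun x => x * p x) = fun x => x * fL x + Real.exp (-r * t) *
      (x * fNx0 x - x * ∫ y : ℝ, fN0 (x - y) * fL y) := by
    funext x; rw [hp]; ring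
  have i : Integrable (fun x => Real.exp (-r * t) *
      (x * fNx0 x - x * ∫ y : ℝ, fN0 (x - y) * fL y)) := (hx.2.1.sub c1).const_mul _
  rw [e, integral_add hL.2.1 i, integral_const_mul,
    integral_sub hx.2.1 c1, c2, hL.2.2.2, hx.2.2.2, add_zero]
end

section
/- Fix r > 0, x_0, x_R ∈ ℝ. Let p(x,t) = f_L(x) + e^{−rt}·( f_{N(x_0,t)}(x) − (f_{N(0,t)} * f_L)(x) ), where f_L(x) = √(r/2)·e^{−√(2r)·|x − x_R|}, f_{N(m,t)}(x) = (2πt)^{−1/2}·e^{−(x−m)²/(2t)}, and * denotes convolution. Then for every t > 0 and every x ∈ ℝ with x ≠ x_R, the partial derivatives exist and the Fokker–Planck equation ∂_t p(x,t) = (1/2)·∂²_{xx} p(x,t) − r·p(x,t) holds. -/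
open MeasureTheory

namespace FPR

noncomputable def g (t z : ℝ) : ℝ := 1 / Real.sqrt (2 * Real.pi * t) * Real.exp (-z ^ 2 / (2 * t))
noncomputable def gz (t z : ℝ) : ℝ := -(z / t) * g t z
noncomputable def gt (t z : ℝ) : ℝ := (z ^ 2 / (2 * t ^ 2) - 1 / (2 * t)) * g t z

lemma hasDerivAt_z (t z : ℝ) (ht : 0 < t) : HasDerivAt (g t) (gz t z) z := by
  have h : HasDerivAt (fun z : ℝ => -z ^ 2 / (2 * t)) (-(z / t)) z := by
    have := ((hasDerivAt_pow 2 z).neg).div_const (2 * t)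
    refine this.congr_deriv ?_
    field_simp
    simp
  have := (h.exp).const_mul (1 / Real.sqrt (2 * Real.pi * t))
  refine this.congr_deriv ?_
  unfold gz g; ring

lemma hasDerivAt_zz (t z : ℝ) (ht : 0 < t) : HasDerivAt (gz t) (2 * gt t z) z := by
  have h : HasDerivAt (fun z : ℝ => -(z / t)) (-(1 / t)) z := ((hasDerivAt_id z).div_const t).neg
  have := h.mul (hasDerivAt_z t z ht)
  refine this.congr_deriv ?_
  unfold gt gz; field_simp; ring

lemma hasDerivAt_t (t z : ℝ) (ht : 0 < t) : HasDerivAt (fun t => g t z) (gt t z) t := by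
  have hpi := Real.pi_pos
  have hpos : 0 < 2 * Real.pi * t := by positivity
  have h1 : HasDerivAt (fun t : ℝ => 2 * Real.pi * t) (2 * Real.pi) t := by
    simpa using (hasDerivAt_id t).const_mul (2 * Real.pi)
  have h2 := (h1.sqrt hpos.ne').inv (Real.sqrt_pos.2 hpos).ne'
  have h3 : HasDerivAt (fun t : ℝ => 2 * t) 2 t := by
    simpa using (hasDerivAt_id t).const_mul (2 : ℝ)
  have h4 := ((h3.inv (by positivity)).const_mul (-z ^ 2)).exp
  have h5 := h2.mul h4
  have hs := Real.sq_sqrt hpos.le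
  have hs0 := (Real.sqrt_pos.2 hpos)
  have e : (fun t => g t z) = (fun t : ℝ => (Real.sqrt (2 * Real.pi * t))⁻¹) *
      (fun t : ℝ => Real.exp (-z ^ 2 * (2 * t)⁻¹)) := by
    funext t; simp [g, div_eq_mul_inv]
  rw [e]
  refine h5.congr_deriv ?_
  unfold gt g
  simp only [Pi.inv_apply, div_eq_mul_inv (-z ^ 2)]
  rw [hs]
  field_simp
  ring

lemma g_nonneg (t z : ℝ) : 0 ≤ g t z := by unfold g; positivity

noncomputable def K (s : ℝ) : ℝ := 1 / Real.sqrt (2 * Real.pi * s)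

lemma K_pos (s : ℝ) (hs : 0 < s) : 0 < K s := by
  have := Real.pi_pos
  unfold K; positivity

lemma K_le {s t : ℝ} (hs : 0 < s) (hst : s ≤ t) : K t ≤ K s := by
  have := Real.pi_pos
  unfold K
  gcongr

lemma g_le {s t : ℝ} (z : ℝ) (hs : 0 < s) (hst : s ≤ t) : g t z ≤ K s := by
  have ht : 0 < t := hs.trans_le hst
  refine le_trans ?_ (K_le hs hst)
  have h : Real.exp (-z ^ 2 / (2 * t)) ≤ 1 := by
    rw [Real.exp_le_one_iff, neg_div]
    have : 0 ≤ z ^ 2 / (2 * t) := by positivity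
    linarith
  have := mul_le_mul_of_nonneg_left h (K_pos t ht).le
  rw [mul_one] at this
  exact this

lemma wg_le {s t : ℝ} (z : ℝ) (hs : 0 < s) (hst : s ≤ t) : z ^ 2 / (2 * t) * g t z ≤ K s := by
  have ht : 0 < t := hs.trans_le hst
  refine le_trans ?_ (K_le hs hst)
  have h : z ^ 2 / (2 * t) * Real.exp (-z ^ 2 / (2 * t)) ≤ 1 := by
    rw [neg_div, Real.exp_neg, ← div_eq_mul_inv, div_le_one (Real.exp_pos _)]
    linarith [Real.add_one_le_exp (z ^ 2 / (2 * t))]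
  have := mul_le_mul_of_nonneg_left h (K_pos t ht).le
  rw [mul_one] at this
  refine le_trans (le_of_eq ?_) this
  unfold g K; ring

lemma gt_bound {s t : ℝ} (z : ℝ) (hs : 0 < s) (hst : s ≤ t) : |gt t z| ≤ 2 * K s / s := by
  have ht : 0 < t := hs.trans_le hst
  have h1 := g_le z hs hst
  have h2 := wg_le z hs hst
  have h3 := g_nonneg t z
  have h4 : 0 ≤ z ^ 2 / (2 * t) * g t z := by positivity
  have e : gt t z = (z ^ 2 / (2 * t) * g t z - g t z / 2) / t := by
    unfold gt; field_simp
  rw [e, abs_div, abs_of_pos ht]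
  have hK := K_pos s hs
  have : |z ^ 2 / (2 * t) * g t z - g t z / 2| ≤ 2 * K s := by
    rw [abs_le]; constructor <;> linarith
  gcongr

lemma gz_bound {t : ℝ} (z : ℝ) (ht : 0 < t) : |gz t z| ≤ K t / t + 2 * K t := by
  have h1 := g_le z ht le_rfl
  have h2 := wg_le z ht le_rfl
  have h3 := g_nonneg t z
  have e : |gz t z| = |z| * (g t z / t) := by
    unfold gz; rw [abs_mul, abs_neg, abs_div, abs_of_pos ht, abs_of_nonneg h3]; ring
  have hz : |z| ≤ 1 + z ^ 2 := by rw [abs_le]; constructor <;> nlinarith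
  rw [e]
  calc |z| * (g t z / t) ≤ (1 + z ^ 2) * (g t z / t) := by gcongr
    _ = g t z / t + 2 * (z ^ 2 / (2 * t) * g t z) := by field_simp
    _ ≤ _ := by gcongr

lemma g_cont (t : ℝ) : Continuous (g t) := by unfold g; fun_prop
lemma gz_cont (t : ℝ) : Continuous (gz t) := by
  have := g_cont t
  unfold gz; fun_prop
lemma gt_cont (t : ℝ) : Continuous (gt t) := by
  have := g_cont t
  unfold gt; fun_prop

variable {f : ℝ → ℝ}

lemma meas (hf : Integrable f) {h : ℝ → ℝ} (hh : Continuous h) (x : ℝ) :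
    AEStronglyMeasurable (fun y => h (x - y) * f y) volume :=
  (by fun_prop : Continuous fun y => h (x - y)).aestronglyMeasurable.mul hf.1

lemma integ (hf : Integrable f) {h : ℝ → ℝ} (hh : Continuous h) {C : ℝ} (hC : ∀ z, |h z| ≤ C)
    (x : ℝ) : Integrable (fun y => h (x - y) * f y) :=
  hf.bdd_mul (c := C) (by fun_prop : Continuous fun y => h (x - y)).aestronglyMeasurable
    (.of_forall fun y => hC _)

lemma conv_deriv (hf : Integrable f) {h h' : ℝ → ℝ} (hh : Continuous h) (hh' : Continuous h')
    {C C' : ℝ} (hC : ∀ z, |h z| ≤ C) (hC' : ∀ z, |h' z| ≤ C')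
    (hd : ∀ z, HasDerivAt h (h' z) z) (x : ℝ) :
    HasDerivAt (fun x => ∫ y, h (x - y) * f y) (∫ y, h' (x - y) * f y) x := by
  refine (hasDerivAt_integral_of_dominated_loc_of_deriv_le (F := fun x y => h (x - y) * f y)
    (F' := fun x y => h' (x - y) * f y) (bound := fun y => C' * |f y|) (s := Set.univ)
    Filter.univ_mem (.of_forall fun x => meas hf hh x) (integ hf hh hC x) (meas hf hh' x)
    (.of_forall fun y z _ => ?_) (hf.abs.const_mul C') (.of_forall fun y z _ => ?_)).2
  · rw [Real.norm_eq_abs, abs_mul]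
    exact mul_le_mul_of_nonneg_right (hC' _) (abs_nonneg _)
  · exact ((hd (z - y)).comp_sub_const z y).mul_const (f y)

lemma conv_t (hf : Integrable f) (x t : ℝ) (ht : 0 < t) :
    HasDerivAt (fun t => ∫ y, g t (x - y) * f y) (∫ y, gt t (x - y) * f y) t := by
  have h2 : 0 < t / 2 := by positivity
  refine (hasDerivAt_integral_of_dominated_loc_of_deriv_le (F := fun t y => g t (x - y) * f y)
    (F' := fun t y => gt t (x - y) * f y) (bound := fun y => (2 * K (t/2) / (t/2)) * |f y|)
    (s := Set.Ioi (t / 2))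
    (Ioi_mem_nhds (by linarith)) (.of_forall fun t => meas hf (g_cont t) x)
    (integ hf (g_cont t) (C := K t) (fun z => ?_) x) (meas hf (gt_cont t) x)
    (.of_forall fun y z hz => ?_) (hf.abs.const_mul _) (.of_forall fun y z hz => ?_)).2
  · rw [abs_of_nonneg (g_nonneg _ _)]; exact g_le z ht le_rfl
  · rw [Real.norm_eq_abs, abs_mul]
    exact mul_le_mul_of_nonneg_right (gt_bound _ h2 (le_of_lt hz)) (abs_nonneg _)
  · exact (hasDerivAt_t z (x - y) (h2.trans hz)).mul_const (f y)

lemma conv_z (hf : Integrable f) (x t : ℝ) (ht : 0 < t) :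
    HasDerivAt (fun x => ∫ y, g t (x - y) * f y) (∫ y, gz t (x - y) * f y) x := by
  refine conv_deriv hf (g_cont t) (gz_cont t) (C := K t) (fun z => ?_)
    (fun z => gz_bound z ht) (fun z => hasDerivAt_z t z ht) x
  rw [abs_of_nonneg (g_nonneg _ _)]; exact g_le z ht le_rfl

lemma conv_zz (hf : Integrable f) (x t : ℝ) (ht : 0 < t) :
    HasDerivAt (fun x => ∫ y, gz t (x - y) * f y) (2 * ∫ y, gt t (x - y) * f y) x := by
  have := conv_deriv hf (h := gz t) (h' := fun z => 2 * gt t z) (gz_cont t)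
    ((gt_cont t).const_mul 2)
    (fun z => gz_bound z ht) (C' := 2 * (2 * K t / t)) (fun z => ?_)
    (fun z => hasDerivAt_zz t z ht) x
  · simpa only [mul_assoc, integral_const_mul] using this
  · rw [abs_mul, abs_two]; have := gt_bound z ht le_rfl; linarith

lemma integ_exp (a c : ℝ) (ha : 0 < a) : Integrable fun x : ℝ => Real.exp (-a * |x - c|) := by
  have : Integrable fun x : ℝ => Real.exp (-a * |x|) := by
    rw [← integrableOn_univ, ← Set.Iic_union_Ioi (a := (0:ℝ))]
    refine IntegrableOn.union ?_ ?_
    · refine (integrableOn_exp_mul_Iic ha 0).congr_fun (fun x hx => ?_) measurableSet_Iic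
      simp only [Set.mem_Iic] at hx
      simp [abs_of_nonpos hx]
    · refine (integrableOn_exp_mul_Ioi (neg_lt_zero.2 ha) 0).congr_fun (fun x hx => ?_)
        measurableSet_Ioi
      simp only [Set.mem_Ioi] at hx
      simp [abs_of_pos hx]
  exact this.comp_sub_right c

lemma exists_sign (x c : ℝ) (h : x ≠ c) :
    ∃ σ : ℝ, σ ^ 2 = 1 ∧ ∀ᶠ y in nhds x, |y - c| = σ * (y - c) := by
  rcases lt_or_gt_of_ne h with h | h
  · refine ⟨-1, by norm_num, ?_⟩
    filter_upwards [Iio_mem_nhds h] with y hy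
    rw [abs_of_neg (sub_neg.2 hy)]; ring
  · refine ⟨1, by norm_num, ?_⟩
    filter_upwards [Ioi_mem_nhds h] with y hy
    rw [abs_of_pos (sub_pos.2 hy)]; ring

end FPR


/-- Away from the resetting point `xR`, the explicit density
`p(x,t) = f_L(x) + e^{-rt}·(f_{N(x0,t)}(x) - (f_{N(0,t)} * f_L)(x))` of Brownian
motion with Poissonian resetting satisfies the Fokker–Planck equation
`∂ₜ p = (1/2)·∂²ₓₓ p - r·p` (the Dirac-delta source term vanishes for `x ≠ xR`). -/
theorem fokker_planck_resetting (r x0 xR : ℝ) (hr : 0 < r)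
    (fL : ℝ → ℝ) (fN : ℝ → ℝ → ℝ → ℝ) (p : ℝ → ℝ → ℝ)
    (hfL : ∀ x, fL x = Real.sqrt (r / 2) * Real.exp (-(Real.sqrt (2 * r)) * |x - xR|))
    (hfN : ∀ m t x, fN m t x =
      1 / Real.sqrt (2 * Real.pi * t) * Real.exp (-(x - m) ^ 2 / (2 * t)))
    (hp : ∀ x t, p x t =
      fL x + Real.exp (-r * t) * (fN x0 t x - ∫ y : ℝ, fN 0 t (x - y) * fL y)) :
    ∀ t : ℝ, 0 < t → ∀ x : ℝ, x ≠ xR →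
      ∃ pt px pxx : ℝ,
        HasDerivAt (fun τ => p x τ) pt t ∧
        HasDerivAt (fun y => p y t) px x ∧
        HasDerivAt (deriv fun y => p y t) pxx x ∧
        pt = 1 / 2 * pxx - r * p x t := by
  intro t ht x hx
  have ha : 0 < Real.sqrt (2 * r) := Real.sqrt_pos.2 (by positivity)
  have ha2 : Real.sqrt (2 * r) ^ 2 = 2 * r := Real.sq_sqrt (by positivity)
  have hf : Integrable fL := by
    rw [funext hfL]
    exact (FPR.integ_exp _ xR ha).const_mul _
  set a := Real.sqrt (2 * r) with ha_def
  set c := Real.sqrt (r / 2)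
  obtain ⟨σ, hσ, hev⟩ := FPR.exists_sign x xR hx
  have hN : ∀ m t x, fN m t x = FPR.g t (x - m) := fun m t x => hfN m t x
  have hp' : ∀ x t, p x t = fL x + Real.exp (-r * t) *
      (FPR.g t (x - x0) - ∫ y : ℝ, FPR.g t (x - y) * fL y) := by
    intro x t; rw [hp]; simp only [hN, sub_zero]
  have hE : ∀ C y : ℝ, HasDerivAt (fun y => C * Real.exp (-a * (σ * (y - xR))))
      (C * (-a * σ) * Real.exp (-a * (σ * (y - xR)))) y := by
    intro C y
    have h1 : HasDerivAt (fun y : ℝ => -a * (σ * (y - xR))) (-a * (σ * 1)) y :=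
      (((hasDerivAt_id y).sub_const xR).const_mul σ).const_mul (-a)
    refine (h1.exp.const_mul C).congr_deriv ?_
    ring
  have hq1 : ∀ y, HasDerivAt (fun y => c * Real.exp (-a * (σ * (y - xR))) + Real.exp (-r * t) *
      (FPR.g t (y - x0) - ∫ z : ℝ, FPR.g t (y - z) * fL z))
      (c * (-a * σ) * Real.exp (-a * (σ * (y - xR))) + Real.exp (-r * t) *
      (FPR.gz t (y - x0) - ∫ z : ℝ, FPR.gz t (y - z) * fL z)) y := fun y =>
    (hE c y).add ((((FPR.hasDerivAt_z t (y - x0) ht).comp_sub_const y x0).sub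
      (FPR.conv_z hf y t ht)).const_mul _)
  have hq2 : ∀ y, HasDerivAt (fun y => c * (-a * σ) * Real.exp (-a * (σ * (y - xR))) +
      Real.exp (-r * t) * (FPR.gz t (y - x0) - ∫ z : ℝ, FPR.gz t (y - z) * fL z))
      (c * (-a * σ) * (-a * σ) * Real.exp (-a * (σ * (y - xR))) + Real.exp (-r * t) *
      (2 * FPR.gt t (y - x0) - 2 * ∫ z : ℝ, FPR.gt t (y - z) * fL z)) y := fun y =>
    (hE (c * (-a * σ)) y).add ((((FPR.hasDerivAt_zz t (y - x0) ht).comp_sub_const y x0).sub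
      (FPR.conv_zz hf y t ht)).const_mul _)
  have hpq : (fun y => p y t) =ᶠ[nhds x] (fun y => c * Real.exp (-a * (σ * (y - xR))) +
      Real.exp (-r * t) * (FPR.g t (y - x0) - ∫ z : ℝ, FPR.g t (y - z) * fL z)) := by
    filter_upwards [hev] with y hy
    rw [hp', hfL y, hy]
  have hte : HasDerivAt (fun τ : ℝ => Real.exp (-r * τ)) (Real.exp (-r * t) * (-r * 1)) t :=
    ((hasDerivAt_id t).const_mul (-r)).exp
  have hT := (hte.mul ((FPR.hasDerivAt_t t (x - x0) ht).sub (FPR.conv_t hf x t ht))).const_add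
    (fL x)
  refine ⟨_, _, _, hT.congr_of_eventuallyEq (.of_forall fun τ => hp' x τ), (hq1 x).congr_of_eventuallyEq hpq, (hq2 x).congr_of_eventuallyEq ?_, ?_⟩
  · refine hpq.deriv.trans (.of_forall fun y => (hq1 y).deriv)
  · have h0 : fL x = c * Real.exp (-a * (σ * (x - xR))) := by rw [hfL x, hev.self_of_nhds]
    have h1 : c * (-a * σ) * (-a * σ) = c * (2 * r) := by
      rw [← ha2]; linear_combination c * a ^ 2 * hσ
    rw [hp', h1, h0]
    simp only [Pi.sub_apply]
    ring
end

section
/- Let r : [0,∞) → [0,∞) be continuous, R(t) = ∫_0^t r(ω) dω, t > 0 and s ∈ ℝ. Define f(x,t) = e^{−R(t)}·f_{N(0,t)}(x) + e^{−R(t)}·∫_0^t r(ω)·e^{R(ω)}·f_{N(0,t−ω)}(x) dω, where f_{N(0,u)}(x) = (2πu)^{−1/2}·e^{−x²/(2u)}. Then ∫_ℝ f(x,t)·e^{i s x} dx = e^{−R(t) − t s²/2}·( 1 + ∫_0^t r(w)·e^{R(w) + w s²/2} dw ). -/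
open MeasureTheory

lemma gauss_aux (u : ℝ) (hu : 0 < u) (x : ℝ) :
    1 / Real.sqrt (2 * Real.pi * u) * Real.exp (-x ^ 2 / (2 * u)) =
      ProbabilityTheory.gaussianPDFReal 0 ⟨u, hu.le⟩ x := by
  simp [ProbabilityTheory.gaussianPDFReal]
  rfl

lemma gauss_fourier (u s : ℝ) (hu : 0 < u) :
    ∫ x : ℝ, ((ProbabilityTheory.gaussianPDFReal 0 ⟨u, hu.le⟩ x : ℝ) : ℂ) *
      Complex.exp (Complex.I * (s : ℂ) * (x : ℂ)) = Complex.exp (-(u * s ^ 2 / 2)) := by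
  have hv : (⟨u, hu.le⟩ : NNReal) ≠ 0 := by
    intro h
    exact hu.ne' (congrArg NNReal.toReal h)
  have h := ProbabilityTheory.charFun_gaussianReal (μ := 0) (v := ⟨u, hu.le⟩) s
  rw [charFun_apply_real, ProbabilityTheory.integral_gaussianReal_eq_integral_smul hv] at h
  simp only [Complex.real_smul] at h
  have e : ∀ x : ℝ, Complex.I * (s : ℂ) * (x : ℂ) = s * x * Complex.I := fun x => by ring
  simp only [e]
  rw [h]
  congr 1
  simp
  exact Or.inl rfl

theorem fourier_nonhom_resetting_pdf (r : ℝ → ℝ)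
    (hrc : ContinuousOn r (Set.Ici (0 : ℝ)))
    (hrnn : ∀ u ∈ Set.Ici (0 : ℝ), 0 ≤ r u)
    (t s : ℝ) (ht : 0 < t)
    (R : ℝ → ℝ) (fN : ℝ → ℝ → ℝ) (f : ℝ → ℝ → ℝ)
    (hR : ∀ u, R u = ∫ ω in (0 : ℝ)..u, r ω)
    (hfN : ∀ u x, fN u x = 1 / Real.sqrt (2 * Real.pi * u) * Real.exp (-x ^ 2 / (2 * u)))
    (hf : ∀ x u, f x u = Real.exp (-R u) * fN u x +
      Real.exp (-R u) * ∫ ω in (0 : ℝ)..u, r ω * Real.exp (R ω) * fN (u - ω) x) :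
    (∫ x : ℝ, ((f x t : ℝ) : ℂ) * Complex.exp (Complex.I * (s : ℂ) * (x : ℂ))) =
      ((Real.exp (-R t - t * s ^ 2 / 2) *
        (1 + ∫ w in (0 : ℝ)..t, r w * Real.exp (R w + w * s ^ 2 / 2)) : ℝ) : ℂ) := by
  have hv : ∀ u (hu : 0 < u), (⟨u, hu.le⟩ : NNReal) ≠ 0 := fun u hu h =>
    hu.ne' (congrArg NNReal.toReal h)
  have hG : ∀ u (hu : 0 < u) x, fN u x = ProbabilityTheory.gaussianPDFReal 0 ⟨u, hu.le⟩ x :=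
    fun u hu x => by rw [hfN, gauss_aux u hu x]
  have hfour : ∀ u, 0 < u → ∫ x : ℝ, ((fN u x : ℝ) : ℂ) *
      Complex.exp (Complex.I * (s : ℂ) * (x : ℂ)) = Complex.exp (-(u * s ^ 2 / 2)) := by
    intro u hu
    simp only [hG u hu]
    exact gauss_fourier u s hu
  have hnexp : ∀ x : ℝ, ‖Complex.exp (Complex.I * (s : ℂ) * (x : ℂ))‖ = 1 := by
    intro x
    have : Complex.I * (s : ℂ) * (x : ℂ) = ((s * x : ℝ) : ℂ) * Complex.I := by push_cast; ring
    rw [this, Complex.norm_exp_ofReal_mul_I]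
  have hfint : ∀ u, 0 < u → Integrable (fun x : ℝ => ((fN u x : ℝ) : ℂ) *
      Complex.exp (Complex.I * (s : ℂ) * (x : ℂ))) := by
    intro u hu
    simp only [hG u hu]
    have h := (ProbabilityTheory.integrable_gaussianPDFReal 0 ⟨u, hu.le⟩).ofReal (𝕜 := ℂ)
    refine h.mul_bdd (c := 1) ?_ (Filter.Eventually.of_forall fun x => (hnexp x).le)
    exact (by fun_prop : Continuous fun x : ℝ =>
      Complex.exp (Complex.I * (s : ℂ) * (x : ℂ))).aestronglyMeasurable
  have hnonneg : ∀ u x, 0 ≤ fN u x := fun u x => by rw [hfN]; positivity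
  have hnint : ∀ u, 0 < u → ∫ x, fN u x = 1 := by
    intro u hu
    simp only [hG u hu]
    exact ProbabilityTheory.integral_gaussianPDFReal_eq_one 0 (hv u hu)
  have hrc' : ContinuousOn r (Set.Icc 0 t) := hrc.mono Set.Icc_subset_Ici_self
  have hRc : ContinuousOn R (Set.Icc 0 t) := by
    have h : ContinuousOn (fun u => ∫ ω in (0:ℝ)..u, r ω) (Set.uIcc 0 t) := by
      apply intervalIntegral.continuousOn_primitive_interval
      rw [Set.uIcc_of_le ht.le]
      exact hrc'.integrableOn_Icc
    rw [Set.uIcc_of_le ht.le] at h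
    exact h.congr fun u _ => hR u
  have hgc : ContinuousOn (fun ω => r ω * Real.exp (R ω)) (Set.Icc 0 t) :=
    hrc'.mul hRc.rexp
  have hgi : IntegrableOn (fun ω => r ω * Real.exp (R ω)) (Set.Ioc 0 t) :=
    hgc.integrableOn_Icc.mono_set Set.Ioc_subset_Icc_self
  obtain ⟨g, hg⟩ : ∃ g : ℝ → ℝ, ∀ ω, g ω = r ω * Real.exp (R ω) := ⟨_, fun _ => rfl⟩
  simp only [← hg] at hgi hf
  let F : ℝ → ℝ → ℂ := fun ω x => (g ω : ℂ) * (((fN (t - ω) x : ℝ) : ℂ) *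
      Complex.exp (Complex.I * (s : ℂ) * (x : ℂ)))
  have hne : ∀ᵐ ω ∂(volume.restrict (Set.Ioc 0 t)), 0 < t - ω := by
    have h1 : ∀ᵐ ω ∂(volume.restrict (Set.Ioc 0 t)), ω ≠ t :=
      ae_restrict_of_ae (Measure.ae_ne volume t)
    filter_upwards [h1, ae_restrict_mem measurableSet_Ioc] with ω h h'
    have := lt_of_le_of_ne h'.2 h
    linarith
  have hFint : Integrable (Function.uncurry F)
      ((volume.restrict (Set.Ioc 0 t)).prod (volume : Measure ℝ)) := by
    have hm : AEStronglyMeasurable (Function.uncurry F)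
      ((volume.restrict (Set.Ioc 0 t)).prod (volume : Measure ℝ)) := by
      have h1 : AEStronglyMeasurable (fun p : ℝ × ℝ => (g p.1 : ℂ))
          ((volume.restrict (Set.Ioc 0 t)).prod (volume : Measure ℝ)) :=
        (hgi.ofReal (𝕜 := ℂ)).aestronglyMeasurable.comp_fst
      refine h1.mul ?_
      simp only [hfN]
      apply Measurable.aestronglyMeasurable
      fun_prop
    rw [integrable_prod_iff hm]
    constructor
    · filter_upwards [hne] with ω hω
      exact (hfint _ hω).const_mul (g ω : ℂ)
    · refine hgi.norm.congr ?_
      filter_upwards [hne] with ω hω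
      simp only [F, Function.uncurry, norm_mul, hnexp, mul_one, Complex.norm_real]
      rw [integral_const_mul]
      have : ∀ x, ‖fN (t - ω) x‖ = fN (t - ω) x := fun x => Real.norm_of_nonneg (hnonneg _ _)
      simp only [this, hnint _ hω, mul_one]
  have hswap := integral_integral_swap hFint
  have hJ : Integrable (fun x : ℝ => ∫ ω in Set.Ioc 0 t, F ω x) := hFint.integral_prod_right
  have hL : ∀ x : ℝ, ((f x t : ℝ) : ℂ) * Complex.exp (Complex.I * (s : ℂ) * (x : ℂ)) =
      (Real.exp (-R t) : ℂ) * (((fN t x : ℝ) : ℂ) * Complex.exp (Complex.I * (s : ℂ) * (x : ℂ)))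
      + (Real.exp (-R t) : ℂ) * ∫ ω in Set.Ioc 0 t, F ω x := by
    intro x
    have : ∫ ω in Set.Ioc 0 t, F ω x = ((∫ ω in Set.Ioc 0 t, g ω * fN (t - ω) x : ℝ) : ℂ) *
        Complex.exp (Complex.I * (s : ℂ) * (x : ℂ)) := by
      rw [← integral_complex_ofReal, ← integral_mul_const]
      congr 1
      ext ω
      simp only [F]
      push_cast
      ring
    rw [this, hf, intervalIntegral.integral_of_le ht.le]
    push_cast
    ring
  simp only [hL]
  rw [integral_add ((hfint t ht).const_mul _) (hJ.const_mul _), integral_const_mul,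
    integral_const_mul, hfour t ht, ← hswap]
  have hK : ∫ ω in Set.Ioc 0 t, ∫ x, F ω x =
      ((Real.exp (-(t * s ^ 2 / 2)) *
        ∫ w in Set.Ioc 0 t, r w * Real.exp (R w + w * s ^ 2 / 2) : ℝ) : ℂ) := by
    rw [← integral_const_mul, ← integral_complex_ofReal]
    apply integral_congr_ae
    filter_upwards [hne] with ω hω
    simp only [F]
    rw [integral_const_mul, hfour _ hω, hg]
    have e : Complex.exp (-(((t - ω : ℝ) : ℂ) * s ^ 2 / 2)) =
        ((Real.exp (-(t * s ^ 2 / 2)) * Real.exp (ω * s ^ 2 / 2) : ℝ) : ℂ) := by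
      rw [← Real.exp_add]
      push_cast
      congr 1
      ring
    rw [e, Real.exp_add]
    push_cast
    ring
  rw [hK, intervalIntegral.integral_of_le ht.le, sub_eq_add_neg, Real.exp_add]
  push_cast
  ring
end

section
/- Let r : [0,∞) → [0,∞) be continuous, R(t) = ∫_0^t r(ω) dω, and t > 0. Define f(x,t) = e^{−R(t)}·f_{N(0,t)}(x) + e^{−R(t)}·∫_0^t r(ω)·e^{R(ω)}·f_{N(0,t−ω)}(x) dω, where f_{N(0,u)}(x) = (2πu)^{−1/2}·e^{−x²/(2u)}. Then the mean squared displacement satisfies ∫_ℝ x²·f(x,t) dx = e^{−R(t)}·∫_0^t e^{R(ω)} dω. -/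
open MeasureTheory

lemma aux_moment (u : ℝ) (hu : 0 ≤ u) :
    ∫ x : ℝ, x ^ 2 * (1 / Real.sqrt (2 * Real.pi * u) * Real.exp (-x ^ 2 / (2 * u))) = u := by
  rcases hu.eq_or_lt with rfl | hu
  · simp
  lift u to NNReal using hu.le
  have hv : u ≠ 0 := by
    rintro rfl
    simp at hu
  have h := ProbabilityTheory.variance_fun_id_gaussianReal (μ := 0) (v := u)
  rw [ProbabilityTheory.variance_eq_integral measurable_id'.aemeasurable,
    ProbabilityTheory.integral_id_gaussianReal,
    ProbabilityTheory.integral_gaussianReal_eq_integral_smul hv] at h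
  refine Eq.trans ?_ h
  refine integral_congr_ae (Filter.Eventually.of_forall fun x => ?_)
  simp only [ProbabilityTheory.gaussianPDFReal, smul_eq_mul, sub_zero, one_div]
  ring

lemma aux_int (u : ℝ) (hu : 0 ≤ u) :
    Integrable (fun x : ℝ =>
      x ^ 2 * (1 / Real.sqrt (2 * Real.pi * u) * Real.exp (-x ^ 2 / (2 * u)))) := by
  rcases hu.eq_or_lt with rfl | hu
  · simp
  by_contra h
  have := aux_moment u hu.le
  rw [integral_undef h] at this
  exact hu.ne this

lemma aux_cont (r : ℝ → ℝ) (hr : Continuous r) (hrnn : ∀ u, 0 ≤ r u)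
    (t : ℝ) (ht : 0 < t)
    (R : ℝ → ℝ) (fN : ℝ → ℝ → ℝ)
    (hR : ∀ u, R u = ∫ ω in (0 : ℝ)..u, r ω)
    (hfN : ∀ u x, fN u x = 1 / Real.sqrt (2 * Real.pi * u) * Real.exp (-x ^ 2 / (2 * u))) :
    (∫ x : ℝ, x ^ 2 * (Real.exp (-R t) * fN t x +
      Real.exp (-R t) * ∫ ω in (0 : ℝ)..t, r ω * Real.exp (R ω) * fN (t - ω) x))
      = Real.exp (-R t) * ∫ ω in (0 : ℝ)..t, Real.exp (R ω) := by
  have hRd : ∀ u, HasDerivAt R (r u) u := by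
    intro u
    have : R = fun u => ∫ ω in (0 : ℝ)..u, r ω := funext hR
    rw [this]
    exact intervalIntegral.integral_hasDerivAt_right (hr.intervalIntegrable _ _)
      (hr.stronglyMeasurableAtFilter _ _) hr.continuousAt
  have hRc : Continuous R := continuous_iff_continuousAt.2 fun u => (hRd u).continuousAt
  have hR0 : R 0 = 0 := by simp [hR]
  have hM : ∀ u, 0 ≤ u → ∫ x : ℝ, x ^ 2 * fN u x = u := by
    intro u hu; simp only [hfN]; exact aux_moment u hu
  have hI : ∀ u, 0 ≤ u → Integrable (fun x : ℝ => x ^ 2 * fN u x) := by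
    intro u hu; simp only [hfN]; exact aux_int u hu
  have hnn : ∀ u x, 0 ≤ fN u x := by
    intro u x; rw [hfN]; positivity
  have hgc : Continuous fun ω => r ω * Real.exp (R ω) := by fun_prop
  have ibp : ∫ ω in (0 : ℝ)..t, r ω * Real.exp (R ω) * (t - ω)
      = -t + ∫ ω in (0 : ℝ)..t, Real.exp (R ω) := by
    have h1 : ∫ ω in (0 : ℝ)..t, (r ω * Real.exp (R ω) * (t - ω) - Real.exp (R ω))
        = Real.exp (R t) * (t - t) - Real.exp (R 0) * (t - 0) := by
      refine intervalIntegral.integral_eq_sub_of_hasDerivAt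
        (f := fun ω => Real.exp (R ω) * (t - ω)) (fun ω _ => ?_) ?_
      · have := ((hRd ω).exp).mul ((hasDerivAt_id ω).const_sub t)
        exact this.congr_deriv (by simp only [id]; ring)
      · apply Continuous.intervalIntegrable; fun_prop
    rw [intervalIntegral.integral_sub (by apply Continuous.intervalIntegrable; fun_prop)
      (by apply Continuous.intervalIntegrable; fun_prop), hR0] at h1
    simp at h1
    linarith
  let μ := (volume : Measure ℝ).restrict (Set.Ioc 0 t)
  let F : ℝ → ℝ → ℝ := fun x ω => r ω * Real.exp (R ω) * (x ^ 2 * fN (t - ω) x)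
  have hFint : Integrable (Function.uncurry F) ((volume : Measure ℝ).prod μ) := by
    have hm : Measurable (Function.uncurry F) := by
      have : Function.uncurry F = fun p : ℝ × ℝ => r p.2 * Real.exp (R p.2) * (p.1 ^ 2 *
        (1 / Real.sqrt (2 * Real.pi * (t - p.2)) * Real.exp (-p.1 ^ 2 / (2 * (t - p.2))))) := by
        funext p; simp [Function.uncurry, F, hfN]
      rw [this]
      have := hr.measurable
      have := hRc.measurable
      fun_prop
    rw [integrable_prod_iff' hm.aestronglyMeasurable]
    constructor
    · filter_upwards [ae_restrict_mem measurableSet_Ioc] with ω hω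
      exact (hI (t - ω) (by linarith [hω.2])).const_mul (r ω * Real.exp (R ω))
    · have : Integrable (fun ω => r ω * Real.exp (R ω) * (t - ω)) μ := by
        have : IntervalIntegrable (fun ω => r ω * Real.exp (R ω) * (t - ω)) volume 0 t := by
          apply Continuous.intervalIntegrable; fun_prop
        exact (intervalIntegrable_iff_integrableOn_Ioc_of_le ht.le).1 this
      refine this.congr ?_
      filter_upwards [ae_restrict_mem measurableSet_Ioc] with ω hω
      have h0 : ∀ x, ‖Function.uncurry F (x, ω)‖ = r ω * Real.exp (R ω) * (x ^ 2 * fN (t - ω) x) := by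
        intro x
        have := hnn (t - ω) x
        have := hrnn ω
        exact Real.norm_of_nonneg (by simp only [Function.uncurry, F]; positivity)
      simp only [h0]
      rw [integral_const_mul, hM _ (by linarith [hω.2])]
  have hFe : ∀ x, x ^ 2 * ∫ ω in (0 : ℝ)..t, r ω * Real.exp (R ω) * fN (t - ω) x
      = ∫ ω, F x ω ∂μ := by
    intro x
    rw [intervalIntegral.integral_of_le ht.le, ← integral_const_mul]
    refine integral_congr_ae (Filter.Eventually.of_forall fun ω => ?_)
    simp only [F]; ring
  have hsw : ∫ x, ∫ ω, F x ω ∂μ = ∫ ω in (0 : ℝ)..t, r ω * Real.exp (R ω) * (t - ω) := by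
    rw [integral_integral_swap hFint, intervalIntegral.integral_of_le ht.le]
    refine integral_congr_ae ?_
    filter_upwards [ae_restrict_mem measurableSet_Ioc] with ω hω
    simp only [F]
    rw [integral_const_mul, hM _ (by linarith [hω.2])]
  have hFi2 : Integrable (fun x => ∫ ω, F x ω ∂μ) := hFint.integral_prod_left
  have : ∀ x, x ^ 2 * (Real.exp (-R t) * fN t x +
      Real.exp (-R t) * ∫ ω in (0 : ℝ)..t, r ω * Real.exp (R ω) * fN (t - ω) x)
      = Real.exp (-R t) * (x ^ 2 * fN t x + ∫ ω, F x ω ∂μ) := by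
    intro x; rw [← hFe]; ring
  simp only [this]
  rw [integral_const_mul, integral_add (hI t ht.le) hFi2, hM t ht.le, hsw, ibp]
  ring

/-- The mean squared displacement of Brownian motion under non-homogeneous
Poissonian resetting to `0` with intensity `r(t) ≥ 0` and `R(t) = ∫₀ᵗ r`:
`∫ x² f(x,t) dx = e^{-R(t)}·∫₀ᵗ e^{R(ω)} dω`. -/
theorem msd_nonhom_resetting (r : ℝ → ℝ)
    (hrc : ContinuousOn r (Set.Ici (0 : ℝ)))
    (hrnn : ∀ u ∈ Set.Ici (0 : ℝ), 0 ≤ r u)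
    (t : ℝ) (ht : 0 < t)
    (R : ℝ → ℝ) (fN : ℝ → ℝ → ℝ) (f : ℝ → ℝ → ℝ)
    (hR : ∀ u, R u = ∫ ω in (0 : ℝ)..u, r ω)
    (hfN : ∀ u x, fN u x = 1 / Real.sqrt (2 * Real.pi * u) * Real.exp (-x ^ 2 / (2 * u)))
    (hf : ∀ x u, f x u = Real.exp (-R u) * fN u x +
      Real.exp (-R u) * ∫ ω in (0 : ℝ)..u, r ω * Real.exp (R ω) * fN (u - ω) x) :
    (∫ x : ℝ, x ^ 2 * f x t) = Real.exp (-R t) * ∫ ω in (0 : ℝ)..t, Real.exp (R ω) := by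
  have hc : Continuous fun u => r (max 0 u) :=
    hrc.comp_continuous (by fun_prop) (fun u => Set.mem_Ici.2 (le_max_left _ _))
  have hRe : ∀ u, 0 ≤ u → (∫ ω in (0 : ℝ)..u, r (max 0 ω)) = R u := by
    intro u hu
    rw [hR]
    refine intervalIntegral.integral_congr fun ω hω => ?_
    rw [Set.uIcc_of_le hu] at hω
    simp only [max_eq_right hω.1]
  have key := aux_cont (fun u => r (max 0 u)) hc (fun u => hrnn _ (Set.mem_Ici.2 (le_max_left _ _))) t ht
    (fun u => ∫ ω in (0 : ℝ)..u, r (max 0 ω)) fN (fun _ => rfl) hfN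
  simp only [hf]
  have e1 : ∀ x, (∫ ω in (0 : ℝ)..t, r ω * Real.exp (R ω) * fN (t - ω) x)
      = ∫ ω in (0 : ℝ)..t, r (max 0 ω) *
        Real.exp (∫ ω in (0 : ℝ)..ω, r (max 0 ω)) * fN (t - ω) x := by
    intro x
    refine intervalIntegral.integral_congr fun ω hω => ?_
    rw [Set.uIcc_of_le ht.le] at hω
    simp only [max_eq_right hω.1, hRe ω hω.1]
  have e2 : (∫ ω in (0 : ℝ)..t, Real.exp (R ω))
      = ∫ ω in (0 : ℝ)..t, Real.exp (∫ ω in (0 : ℝ)..ω, r (max 0 ω)) := by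
    refine intervalIntegral.integral_congr fun ω hω => ?_
    rw [Set.uIcc_of_le ht.le] at hω
    simp only [hRe ω hω.1]
  simp only [e1, e2, ← hRe t ht.le]
  exact key
end

section
/- Let r > 0 and consider the intensity function r(t) = r/(t+1) (the case p = −1), so that R(t) = ∫_0^t r(ω) dω = r·ln(t+1). Then for every t ≥ 0, the mean squared displacement MSD(t) = e^{−R(t)}·∫_0^t e^{R(ω)} dω = (1/(t+1)^r)·∫_0^t (ω+1)^r dω equals (t+1)/(r+1) − 1/((t+1)^r·(r+1)). In particular MSD(t)/t → 1/(r+1) as t → ∞, so the process is asymptotically diffusive. -/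
open MeasureTheory Filter

/-- For the resetting intensity `r(t) = r/(t+1)` (power-law exponent `p = -1`),
with `R(t) = r·ln(t+1)`, the MSD `e^{-R(t)}·∫₀ᵗ e^{R(ω)} dω` equals
`(t+1)/(r+1) - 1/((t+1)^r·(r+1))`, and `MSD(t)/t → 1/(r+1)` as `t → ∞`
(asymptotically diffusive behaviour). -/
theorem msd_power_law_p_neg_one (r : ℝ) (hr : 0 < r)
    (R MSD : ℝ → ℝ)
    (hR : ∀ t, R t = r * Real.log (t + 1))
    (hMSD : ∀ t, MSD t = Real.exp (-R t) * ∫ ω in (0 : ℝ)..t, Real.exp (R ω)) :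
    (∀ t : ℝ, 0 ≤ t →
        (MSD t = (1 / (t + 1) ^ r) * ∫ ω in (0 : ℝ)..t, (ω + 1) ^ r) ∧
        MSD t = (t + 1) / (r + 1) - 1 / ((t + 1) ^ r * (r + 1))) ∧
      Tendsto (fun t => MSD t / t) atTop (nhds (1 / (r + 1))) := by
  have hexp : ∀ t : ℝ, 0 ≤ t → Real.exp (R t) = (t + 1) ^ r := by
    intro t ht
    rw [hR, Real.rpow_def_of_pos (by linarith), mul_comm]
  have h1 : ∀ t : ℝ, 0 ≤ t →
      MSD t = (1 / (t + 1) ^ r) * ∫ ω in (0 : ℝ)..t, (ω + 1) ^ r := by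
    intro t ht
    rw [hMSD, Real.exp_neg, hexp t ht, one_div]
    congr 1
    apply intervalIntegral.integral_congr
    intro x hx
    rw [Set.uIcc_of_le ht] at hx
    exact hexp x hx.1
  have h2 : ∀ t : ℝ, 0 ≤ t →
      MSD t = (t + 1) / (r + 1) - 1 / ((t + 1) ^ r * (r + 1)) := by
    intro t ht
    have hp : 0 < (t + 1) ^ r := Real.rpow_pos_of_pos (by linarith) r
    have hi : ∫ ω in (0 : ℝ)..t, (ω + 1) ^ r = ((t + 1) ^ r * (t + 1) - 1) / (r + 1) := by
      rw [intervalIntegral.integral_comp_add_right (fun x : ℝ => x ^ r) 1,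
        integral_rpow (Or.inl (by linarith)), Real.rpow_add (by linarith), Real.rpow_one]
      simp
    rw [h1 t ht, hi]
    have : r + 1 ≠ 0 := by linarith
    field_simp
  refine ⟨fun t ht => ⟨h1 t ht, h2 t ht⟩, ?_⟩
  have ha : Tendsto (fun t : ℝ => t⁻¹) atTop (nhds 0) := tendsto_inv_atTop_zero
  have hb : Tendsto (fun t : ℝ => ((t + 1) ^ r)⁻¹) atTop (nhds 0) :=
    tendsto_inv_atTop_zero.comp
      ((tendsto_rpow_atTop hr).comp (tendsto_atTop_add_const_right _ 1 tendsto_id))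
  have hc : Tendsto (fun t : ℝ => (1 + t⁻¹ - ((t + 1) ^ r)⁻¹ * t⁻¹) * (1 / (r + 1))) atTop
      (nhds ((1 + 0 - 0 * 0) * (1 / (r + 1)))) :=
    ((ha.const_add 1).sub (hb.mul ha)).mul_const _
  have he : (1 + 0 - 0 * 0) * (1 / (r + 1)) = 1 / (r + 1) := by ring
  rw [he] at hc
  refine hc.congr' ?_
  filter_upwards [eventually_gt_atTop 0] with t ht
  have hp : 0 < (t + 1) ^ r := Real.rpow_pos_of_pos (by linarith) r
  have : r + 1 ≠ 0 := by linarith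
  rw [h2 t ht.le]
  field_simp
end

section
/- Let r > 0 and p ∈ (−1, 0), and set R(t) = (r/(p+1))·((t+1)^{p+1} − 1). Define MSD(t) = e^{−R(t)}·∫_0^t e^{R(ω)} dω. Then lim_{t→∞} r·(t+1)^p·MSD(t) = 1; i.e., MSD(t) is asymptotic to (1/r)·(t+1)^{−p}, so the resetting process is subdiffusive with anomalous exponent −p ∈ (0,1). -/
open MeasureTheory Filter

/-- For power-law resetting intensity `r(t) = r·(t+1)^p` with `p ∈ (-1,0)` and
`R(t) = (r/(p+1))·((t+1)^{p+1} - 1)`, the MSD `e^{-R(t)}·∫₀ᵗ e^{R(ω)} dω`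
satisfies `r·(t+1)^p·MSD(t) → 1` as `t → ∞`; i.e. `MSD(t) ~ (1/r)·(t+1)^{-p}`,
subdiffusive behaviour with anomalous exponent `-p ∈ (0,1)`. -/
theorem msd_power_law_subdiffusive (r p : ℝ) (hr : 0 < r)
    (hp₁ : -1 < p) (hp₂ : p < 0)
    (R MSD : ℝ → ℝ)
    (hR : ∀ t, R t = r / (p + 1) * ((t + 1) ^ (p + 1) - 1))
    (hMSD : ∀ t, MSD t = Real.exp (-R t) * ∫ ω in (0 : ℝ)..t, Real.exp (R ω)) :
    Tendsto (fun t => r * (t + 1) ^ p * MSD t) atTop (nhds 1) := by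
  have hq : 0 < p + 1 := by linarith
  have hRc : Continuous R := by
    have : R = fun t => r / (p + 1) * ((t + 1) ^ (p + 1) - 1) := funext hR
    rw [this]
    have h1 : Continuous fun t : ℝ => (t + 1) ^ (p + 1) :=
      (continuous_id.add continuous_const).rpow_const (fun _ => Or.inr hq.le)
    fun_prop
  have hEc : Continuous fun t => Real.exp (R t) := Real.continuous_exp.comp hRc
  have hI : ∀ t, HasDerivAt (fun t => ∫ ω in (0 : ℝ)..t, Real.exp (R ω)) (Real.exp (R t)) t :=
    fun t => hEc.integral_hasStrictDerivAt 0 t |>.hasDerivAt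
  have hpow : ∀ (a t : ℝ), 0 ≤ t → HasDerivAt (fun t : ℝ => (t + 1) ^ a) (a * (t + 1) ^ (a - 1)) t := by
    intro a t ht
    have := ((hasDerivAt_id t).add_const 1).rpow_const (p := a) (Or.inl (by simp; linarith))
    simpa using this
  have hRd : ∀ t, 0 ≤ t → HasDerivAt R (r * (t + 1) ^ p) t := by
    intro t ht
    have h := ((hpow (p + 1) t ht).sub_const 1).const_mul (r / (p + 1))
    have e : R = fun t => r / (p + 1) * ((t + 1) ^ (p + 1) - 1) := funext hR
    rw [e]
    have e2 : r / (p + 1) * ((p + 1) * (t + 1) ^ (p + 1 - 1)) = r * (t + 1) ^ p := by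
      rw [add_sub_cancel_right]
      field_simp
    rwa [e2] at h
  have hEd : ∀ t, 0 ≤ t → HasDerivAt (fun t => Real.exp (R t)) (Real.exp (R t) * (r * (t + 1) ^ p)) t :=
    fun t ht => (hRd t ht).exp
  have hR0 : R 0 = 0 := by rw [hR]; simp
  have hs : ∀ t : ℝ, 0 ≤ t → (t + 1) ^ (p + 1) = (t + 1) ^ p * (t + 1) := fun t ht => by
    rw [Real.rpow_add_one (by linarith)]
  have mono : ∀ f f' : ℝ → ℝ, (∀ t, 0 ≤ t → HasDerivAt f (f' t) t) → (∀ t, 0 ≤ t → 0 ≤ f' t) →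
      ∀ t, 0 ≤ t → f 0 ≤ f t := by
    intro f f' hf hf' t ht
    have := monotoneOn_of_deriv_nonneg (convex_Ici (0 : ℝ))
      (fun x hx => (hf x hx).continuousAt.continuousWithinAt)
      (fun x hx => (hf x (interior_subset hx)).differentiableAt.differentiableWithinAt)
      (fun x hx => by rw [(hf x (interior_subset hx)).deriv]; exact hf' x (interior_subset hx))
    exact this (Set.mem_Ici.2 le_rfl) ht ht
  -- upper bound
  have up : ∀ t, 0 ≤ t → ∫ ω in (0 : ℝ)..t, Real.exp (R ω) ≤ Real.exp (R t) * ((t + 1) ^ (-p) / r) := by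
    intro t ht
    have := mono _ _ (fun t ht => ((hEd t ht).mul ((hpow (-p) t ht).div_const r)).sub (hI t)) (by
      intro t ht
      have h0 : 0 < t + 1 := by linarith
      have h1 : (t + 1) ^ p * (t + 1) ^ (-p) = 1 := by
        rw [← Real.rpow_add h0]; simp
      have h2 : r * (t + 1) ^ p * ((t + 1) ^ (-p) / r) = 1 := by
        field_simp; exact h1
      have h3 : 0 ≤ -p * (t + 1) ^ (-p - 1) / r := by
        have : 0 < -p := by linarith
        positivity
      rw [mul_assoc, h2]
      have := mul_nonneg (Real.exp_pos (R t)).le h3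
      linarith) t ht
    simp only [Pi.sub_apply, Pi.mul_apply, hR0, intervalIntegral.integral_same] at this
    have h3 : 0 < r⁻¹ := by positivity
    simp at this
    linarith
  have lo : ∀ t, 0 ≤ t → Real.exp (R t) * ((t + 1) / (r * (t + 1) ^ (p + 1) + 1)) - 1 / (r + 1)
      ≤ ∫ ω in (0 : ℝ)..t, Real.exp (R ω) := by
    intro t ht
    have := mono _ _ (fun t ht => (hI t).sub ((hEd t ht).mul
      (((hasDerivAt_id t).add_const 1).div (((hpow (p + 1) t ht).const_mul r).add_const 1)
        (by have : 0 < t + 1 := by linarith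
            positivity)))) (by
      intro t ht
      have h0 : 0 < t + 1 := by linarith
      simp only [id, add_sub_cancel_right, Pi.div_apply]
      rw [hs t ht]
      have hx : 0 < (t + 1) ^ p := by positivity
      generalize (t + 1) ^ p = x at hx
      have he := Real.exp_pos (R t)
      generalize Real.exp (R t) = e at he
      generalize t + 1 = s at h0
      have hd : 0 < r * (x * s) + 1 := by positivity
      have : e - (e * (r * x) * (s / (r * (x * s) + 1)) +
        e * ((1 * (r * (x * s) + 1) - s * (r * ((p + 1) * x))) / (r * (x * s) + 1) ^ 2))
         = e * ((p + 1) * (r * x * s)) / (r * (x * s) + 1) ^ 2 := by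
        field_simp
        ring
      rw [this]
      positivity) t ht
    simp only [Pi.sub_apply, Pi.mul_apply, Pi.div_apply, hR0, intervalIntegral.integral_same] at this
    simp at this ⊢
    linarith
  have t1 : Tendsto (fun t : ℝ => t + 1) atTop atTop := tendsto_atTop_add_const_right _ _ tendsto_id
  have tq : Tendsto (fun t : ℝ => r * (t + 1) ^ (p + 1) + 1) atTop atTop :=
    tendsto_atTop_add_const_right _ _ (((tendsto_rpow_atTop hq).comp t1).const_mul_atTop hr)
  have tp : Tendsto (fun t : ℝ => (t + 1) ^ p) atTop (nhds 0) := by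
    have := (tendsto_rpow_neg_atTop (y := -p) (by linarith)).comp t1
    simpa [Function.comp_def] using this
  have tl : Tendsto (fun t : ℝ => 1 - (r * (t + 1) ^ (p + 1) + 1)⁻¹ - r * (t + 1) ^ p * (1 / (r + 1)))
      atTop (nhds 1) := by
    have := (tq.inv_tendsto_atTop.const_sub 1).sub ((tp.const_mul r).mul_const (1 / (r + 1)))
    simpa using this
  refine tendsto_of_tendsto_of_tendsto_of_le_of_le' tl tendsto_const_nhds ?_ ?_
  · filter_upwards [eventually_ge_atTop 0] with t ht
    have h0 : 0 < t + 1 := by linarith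
    have hR1 : 0 ≤ R t := by
      have := mono R _ hRd (fun t ht => by
        have h0 : 0 < t + 1 := by linarith
        positivity) t ht
      rwa [hR0] at this
    have he : Real.exp (-R t) ≤ 1 := Real.exp_le_one_iff.2 (by linarith)
    have hx : 0 < r * (t + 1) ^ p := by positivity
    have hc : 0 < 1 / (r + 1) := by positivity
    rw [hMSD]
    calc _ ≤ r * (t + 1) ^ p * (Real.exp (-R t) * (Real.exp (R t) * ((t + 1) / (r * (t + 1) ^ (p + 1) + 1)) - 1 / (r + 1))) := by
          rw [mul_sub (Real.exp _), ← mul_assoc (Real.exp _) (Real.exp _), ← Real.exp_add,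
            neg_add_cancel, Real.exp_zero, one_mul, mul_sub]
          apply sub_le_sub
          · apply le_of_eq
            have : 0 < r * (t + 1) ^ (p + 1) + 1 := by positivity
            rw [hs t ht] at this ⊢
            field_simp
            ring
          · apply mul_le_mul_of_nonneg_left _ hx.le
            nlinarith
      _ ≤ _ := by
          gcongr
          exact lo t ht
  · filter_upwards [eventually_ge_atTop 0] with t ht
    have h0 : 0 < t + 1 := by linarith
    rw [hMSD]
    calc _ ≤ r * (t + 1) ^ p * (Real.exp (-R t) * (Real.exp (R t) * ((t + 1) ^ (-p) / r))) := by
          gcongr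
          exact up t ht
      _ = 1 := by
          rw [← mul_assoc (Real.exp _) (Real.exp _), ← Real.exp_add,
            neg_add_cancel, Real.exp_zero, one_mul]
          have h1 : (t + 1) ^ p * (t + 1) ^ (-p) = 1 := by
            rw [← Real.rpow_add h0]; simp
          field_simp
          exact h1
end

section
/- Let r > 0 and p < −1, and set R(t) = (r/(p+1))·((t+1)^{p+1} − 1). Define MSD(t) = e^{−R(t)}·∫_0^t e^{R(ω)} dω. Then lim_{t→∞} MSD(t)/t = 1; i.e., for a power-law resetting intensity decaying faster than 1/t, the process displays normal diffusive scaling of the mean squared displacement at large times. -/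
open MeasureTheory Filter

/-- For power-law resetting intensity `r(t) = r·(t+1)^p` with `p < -1` and
`R(t) = (r/(p+1))·((t+1)^{p+1} - 1)`, the MSD `e^{-R(t)}·∫₀ᵗ e^{R(ω)} dω`
satisfies `MSD(t)/t → 1` as `t → ∞`: normal diffusive scaling. -/
theorem msd_power_law_diffusive (r p : ℝ) (hr : 0 < r) (hp : p < -1)
    (R MSD : ℝ → ℝ)
    (hR : ∀ t, R t = r / (p + 1) * ((t + 1) ^ (p + 1) - 1))
    (hMSD : ∀ t, MSD t = Real.exp (-R t) * ∫ ω in (0 : ℝ)..t, Real.exp (R ω)) :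
    Tendsto (fun t => MSD t / t) atTop (nhds 1) := by
  have hq : p + 1 < 0 := by linarith
  set L : ℝ := r / (p + 1) * (0 - 1) with hL
  have hRlim : Tendsto R atTop (nhds L) := by
    have h1 : Tendsto (fun t : ℝ => (t + 1) ^ (p + 1)) atTop (nhds 0) := by
      have h := tendsto_rpow_neg_atTop (y := -(p + 1)) (by linarith)
      rw [neg_neg] at h
      exact h.comp (tendsto_atTop_add_const_right _ 1 tendsto_id)
    have h2 := (h1.sub_const 1).const_mul (r / (p + 1))
    exact h2.congr (fun t => (hR t).symm)
  have hRle : ∀ t, 0 ≤ t → R t ≤ L := by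
    intro t ht
    rw [hR, hL]
    apply mul_le_mul_of_nonpos_left
    · have : 0 ≤ (t + 1) ^ (p + 1) := Real.rpow_nonneg (by linarith) _
      linarith
    · exact (div_neg_of_pos_of_neg hr hq).le
  have hRmeas : Measurable R := by
    have : R = fun t => r / (p + 1) * ((t + 1) ^ (p + 1) - 1) := funext hR
    rw [this]
    fun_prop
  have hint : Tendsto (fun t : ℝ => ∫ u in (0 : ℝ)..1, Real.exp (R (t * u))) atTop
      (nhds (∫ _u in (0 : ℝ)..1, Real.exp L)) := by
    apply intervalIntegral.tendsto_integral_filter_of_dominated_convergence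
      (fun _ => Real.exp L)
    · exact Eventually.of_forall fun t =>
        (Real.measurable_exp.comp (hRmeas.comp (measurable_const_mul t))).aestronglyMeasurable
    · filter_upwards [eventually_ge_atTop (0 : ℝ)] with t ht
      refine Eventually.of_forall fun u hu => ?_
      rw [Set.uIoc_of_le zero_le_one] at hu
      rw [Real.norm_eq_abs, Real.abs_exp]
      exact Real.exp_le_exp.mpr (hRle _ (mul_nonneg ht hu.1.le))
    · exact intervalIntegrable_const
    · refine Eventually.of_forall fun u hu => ?_
      rw [Set.uIoc_of_le zero_le_one] at hu
      exact (Real.continuous_exp.tendsto L).comp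
        (hRlim.comp (tendsto_id.atTop_mul_const hu.1))
  have hexp : Tendsto (fun t => Real.exp (-R t)) atTop (nhds (Real.exp (-L))) :=
    (Real.continuous_exp.tendsto _).comp hRlim.neg
  have hprod := hexp.mul hint
  have h1 : Real.exp (-L) * (∫ _u in (0 : ℝ)..1, Real.exp L) = 1 := by
    rw [intervalIntegral.integral_const, sub_zero, one_smul, ← Real.exp_add, neg_add_cancel,
      Real.exp_zero]
  rw [h1] at hprod
  refine hprod.congr' ?_
  filter_upwards [eventually_gt_atTop (0 : ℝ)] with t ht
  rw [hMSD, intervalIntegral.integral_comp_mul_left (fun x => Real.exp (R x)) ht.ne',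
    mul_zero, mul_one, smul_eq_mul]
  field_simp
end

section
/- Let r > 0 and p > 0, and set R(t) = (r/(p+1))·((t+1)^{p+1} − 1). Define MSD(t) = e^{−R(t)}·∫_0^t e^{R(ω)} dω. Then lim_{t→∞} r·(t+1)^p·MSD(t) = 1; in particular MSD(t) → 0 as t → ∞, so the process with increasing resetting intensity collapses toward the resetting point. -/
open MeasureTheory Filter

/-- For power-law resetting intensity `r(t) = r·(t+1)^p` with `p > 0` and
`R(t) = (r/(p+1))·((t+1)^{p+1} - 1)`, the MSD `e^{-R(t)}·∫₀ᵗ e^{R(ω)} dω`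
satisfies `r·(t+1)^p·MSD(t) → 1` as `t → ∞`; in particular `MSD(t) → 0`,
so the process collapses toward the resetting point. -/
theorem msd_power_law_collapse (r p : ℝ) (hr : 0 < r) (hp : 0 < p)
    (R MSD : ℝ → ℝ)
    (hR : ∀ t, R t = r / (p + 1) * ((t + 1) ^ (p + 1) - 1))
    (hMSD : ∀ t, MSD t = Real.exp (-R t) * ∫ ω in (0 : ℝ)..t, Real.exp (R ω)) :
    Tendsto (fun t => r * (t + 1) ^ p * MSD t) atTop (nhds 1) ∧
      Tendsto MSD atTop (nhds 0) := by
  have hp1 : 0 < p + 1 := by linarith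
  have hu : Tendsto (fun t : ℝ => t + 1) atTop atTop := tendsto_atTop_add_const_right _ _ tendsto_id
  have hv : Tendsto (fun t : ℝ => (t + 1) ^ (p + 1)) atTop atTop :=
    (tendsto_rpow_atTop hp1).comp hu
  have hq : Tendsto (fun t : ℝ => r * (t + 1) ^ p) atTop atTop :=
    ((tendsto_rpow_atTop hp).comp hu).const_mul_atTop hr
  have hqpos : ∀ t : ℝ, 0 ≤ t → 0 < r * (t + 1) ^ p := fun t ht => by positivity
  have hRt : Tendsto R atTop atTop := by
    have : R = fun t => r / (p + 1) * ((t + 1) ^ (p + 1) - 1) := funext hR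
    rw [this]
    exact (tendsto_atTop_add_const_right _ (-1) hv).const_mul_atTop (by positivity)
  have hRc : Continuous R := by
    have : R = fun t => r / (p + 1) * ((t + 1) ^ (p + 1) - 1) := funext hR
    rw [this]
    exact continuous_const.mul (((continuous_id.add continuous_const).rpow_const
      (fun _ => Or.inr hp1.le)).sub continuous_const)
  have hec : Continuous (fun t => Real.exp (R t)) := Real.continuous_exp.comp hRc
  have hRd : ∀ t : ℝ, 0 ≤ t → HasDerivAt R (r * (t + 1) ^ p) t := by
    intro t ht
    have : R = fun t => r / (p + 1) * ((t + 1) ^ (p + 1) - 1) := funext hR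
    rw [this]
    have h := ((((hasDerivAt_id t).add_const 1).rpow_const (p := p + 1)
      (Or.inl (by simp only [id]; positivity))).sub_const 1).const_mul (r / (p + 1))
    refine h.congr_deriv ?_
    simp only [id, add_sub_cancel_right]
    field_simp
  have hed : ∀ t : ℝ, 0 ≤ t → HasDerivAt (fun t => Real.exp (R t))
      (Real.exp (R t) * (r * (t + 1) ^ p)) t := fun t ht => (hRd t ht).exp
  set J : ℝ → ℝ := fun t => ∫ ω in (0 : ℝ)..t, Real.exp (R ω) with hJ
  have hJd : ∀ t, HasDerivAt J (Real.exp (R t)) t := fun t =>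
    intervalIntegral.integral_hasDerivAt_right (hec.intervalIntegrable _ _)
      (hec.stronglyMeasurableAtFilter _ _) hec.continuousAt
  have hJ0 : ∀ t, 0 ≤ t → 0 ≤ J t := fun t ht =>
    intervalIntegral.integral_nonneg ht (fun x _ => (Real.exp_pos _).le)
  have hqd : ∀ t : ℝ, 0 ≤ t → HasDerivAt (fun t : ℝ => r * (t + 1) ^ p)
      (r * (p * (t + 1) ^ (p - 1))) t := by
    intro t ht
    have h := (((hasDerivAt_id t).add_const 1).rpow_const (p := p)
      (Or.inl (by simp only [id]; positivity))).const_mul r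
    refine h.congr_deriv ?_
    simp only [id]
    ring
  have hqe : Tendsto (fun t => r * (t + 1) ^ p * Real.exp (-R t)) atTop (nhds 0) := by
    have h := ((tendsto_rpow_mul_exp_neg_mul_atTop_nhds_zero (p / (p + 1)) (r / (p + 1))
      (by positivity)).comp hv).const_mul (r * Real.exp (r / (p + 1)))
    rw [mul_zero] at h
    refine h.congr' ?_
    filter_upwards [eventually_ge_atTop 0] with t ht
    have h1 : ((t + 1) ^ (p + 1)) ^ (p / (p + 1)) = (t + 1) ^ p := by
      rw [← Real.rpow_mul (by positivity)]
      congr 1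
      field_simp
    have h2 : Real.exp (-R t) = Real.exp (r / (p + 1)) *
        Real.exp (-(r / (p + 1)) * (t + 1) ^ (p + 1)) := by
      rw [← Real.exp_add, hR]
      congr 1
      ring
    simp only [Function.comp, h1, h2]
    ring
  have hlow : ∀ t, 0 ≤ t → Real.exp (R t) - 1 ≤ r * (t + 1) ^ p * J t := by
    have hd : ∀ t : ℝ, 0 ≤ t → HasDerivAt (fun t => r * (t + 1) ^ p * J t - Real.exp (R t))
        (r * (p * (t + 1) ^ (p - 1)) * J t) t := by
      intro t ht
      refine HasDerivAt.congr_deriv (((hqd t ht).mul (hJd t)).sub (hed t ht)) ?_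
      ring
    have hm : MonotoneOn (fun t => r * (t + 1) ^ p * J t - Real.exp (R t)) (Set.Ici 0) := by
      refine monotoneOn_of_deriv_nonneg (convex_Ici 0)
        (fun t ht => (hd t ht).continuousAt.continuousWithinAt)
        (fun t ht => (hd t (interior_subset ht)).differentiableAt.differentiableWithinAt) ?_
      intro t ht
      have ht0 : (0 : ℝ) ≤ t := interior_subset ht
      rw [(hd t ht0).deriv]
      have := hJ0 t ht0
      positivity
    intro t ht
    have h := hm (Set.mem_Ici.2 le_rfl) (Set.mem_Ici.2 ht) ht
    have e0 : J 0 = 0 := by simp [hJ]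
    have e1 : R 0 = 0 := by simp [hR]
    simp only [e0, e1, Real.exp_zero] at h
    linarith
  have hup : ∀ ε : ℝ, 0 < ε → ∃ C T : ℝ, ∀ t, 0 ≤ t → T ≤ t →
      (1 - ε) * J t ≤ Real.exp (R t) / (r * (t + 1) ^ p) + C := by
    intro ε hε
    obtain ⟨T, hT0, hT⟩ : ∃ T : ℝ, 0 ≤ T ∧ ∀ t, T ≤ t → p / (r * ε) ≤ (t + 1) ^ (p + 1) := by
      obtain ⟨T, hT⟩ := eventually_atTop.1 (hv.eventually_ge_atTop (p / (r * ε)))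
      exact ⟨max T 0, le_max_right _ _, fun t ht => hT t ((le_max_left _ _).trans ht)⟩
    have hd : ∀ t : ℝ, 0 ≤ t → HasDerivAt
        (fun t => Real.exp (R t) / (r * (t + 1) ^ p) - (1 - ε) * J t)
        (Real.exp (R t) * (ε - p / (r * (t + 1) ^ (p + 1)))) t := by
      intro t ht
      refine HasDerivAt.congr_deriv (((hed t ht).div (hqd t ht) (hqpos t ht).ne').sub ((hJd t).const_mul (1 - ε))) ?_
      have h0 : 0 < t + 1 := by linarith
      rw [Real.rpow_add_one h0.ne', Real.rpow_sub_one h0.ne']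
      have : 0 < (t + 1) ^ p := by positivity
      field_simp
      ring
    have hm : MonotoneOn (fun t => Real.exp (R t) / (r * (t + 1) ^ p) - (1 - ε) * J t)
        (Set.Ici T) := by
      refine monotoneOn_of_deriv_nonneg (convex_Ici T)
        (fun t ht => (hd t (hT0.trans ht)).continuousAt.continuousWithinAt)
        (fun t ht => (hd t (hT0.trans
          (interior_subset ht))).differentiableAt.differentiableWithinAt) ?_
      intro t ht
      have ht1 : T ≤ t := interior_subset ht
      have ht0 : (0 : ℝ) ≤ t := hT0.trans ht1
      rw [(hd t ht0).deriv]
      refine mul_nonneg (Real.exp_pos _).le (sub_nonneg.2 ?_)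
      have h := hT t ht1
      rw [div_le_iff₀ (by positivity)] at h ⊢
      linarith
    refine ⟨-(Real.exp (R T) / (r * (T + 1) ^ p) - (1 - ε) * J T), T, fun t _ ht => ?_⟩
    have h := hm (Set.mem_Ici.2 le_rfl) (Set.mem_Ici.2 ht) ht
    simp only at h
    linarith
  have hS : Tendsto (fun t => r * (t + 1) ^ p * MSD t) atTop (nhds 1) := by
    refine tendsto_order.2 ⟨fun a ha => ?_, fun b hb => ?_⟩
    · have h1 : Tendsto (fun t => 1 - Real.exp (-R t)) atTop (nhds 1) := by
        simpa using (Real.tendsto_exp_neg_atTop_nhds_zero.comp hRt).const_sub 1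
      filter_upwards [(tendsto_order.1 h1).1 a ha, eventually_ge_atTop 0] with t h2 ht
      refine h2.trans_le ?_
      rw [hMSD]
      have h3 := mul_le_mul_of_nonneg_left (hlow t ht) (Real.exp_pos (-R t)).le
      have h4 : Real.exp (-R t) * Real.exp (R t) = 1 := by rw [← Real.exp_add]; simp
      calc 1 - Real.exp (-R t) = Real.exp (-R t) * (Real.exp (R t) - 1) := by
            rw [mul_sub, h4, mul_one]
        _ ≤ _ := h3
        _ = _ := by simp only [hJ]; ring
    · obtain ⟨ε, hε, hε1, hε2⟩ : ∃ ε : ℝ, 0 < ε ∧ ε < 1 ∧ 1 + ε < (1 - ε) * b := by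
        have e : 0 < b - 1 := by linarith
        refine ⟨(b - 1) / (2 * (b + 1)), by positivity, ?_, ?_⟩
        · rw [div_lt_one (by positivity)]; linarith
        · have : (b - 1) / (2 * (b + 1)) * (b + 1) = (b - 1) / 2 := by
            field_simp
          nlinarith
      obtain ⟨C, T, hCT⟩ := hup ε hε
      have h1 := hqe.const_mul C
      rw [mul_zero] at h1
      filter_upwards [(tendsto_order.1 h1).2 ε hε, eventually_ge_atTop 0,
        eventually_ge_atTop T] with t h2 ht htT
      have hq0 := hqpos t ht
      have h3 := mul_le_mul_of_nonneg_left (hCT t ht htT)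
        (mul_pos hq0 (Real.exp_pos (-R t))).le
      have h4 : Real.exp (-R t) * Real.exp (R t) = 1 := by rw [← Real.exp_add]; simp
      have h5 : r * (t + 1) ^ p * Real.exp (-R t) * (Real.exp (R t) / (r * (t + 1) ^ p) + C)
          = 1 + C * (r * (t + 1) ^ p * Real.exp (-R t)) := by
        rw [← h4]
        generalize r * (t + 1) ^ p = q at *
        field_simp
      rw [h5] at h3
      have h6 : (1 - ε) * (r * (t + 1) ^ p * MSD t) < (1 - ε) * b := by
        have : (1 - ε) * (r * (t + 1) ^ p * MSD t) =
          r * (t + 1) ^ p * Real.exp (-R t) * ((1 - ε) * J t) := by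
          rw [hMSD]; ring
        rw [this]
        linarith
      exact lt_of_mul_lt_mul_left h6 (by linarith)
  refine ⟨hS, ?_⟩
  have h := hS.mul hq.inv_tendsto_atTop
  rw [mul_zero] at h
  refine h.congr' ?_
  filter_upwards [eventually_ge_atTop 0] with t ht
  have := hqpos t ht
  simp only [Pi.inv_apply]
  rw [mul_comm, inv_mul_cancel_left₀ this.ne']
end

section
/- Let r > 0 and p > 0, set r(t) = r·(t+1)^p and R(t) = (r/(p+1))·((t+1)^{p+1} − 1), and define φ_t(s) = e^{−R(t) − t s²/2}·( 1 + ∫_0^t r(w)·e^{R(w) + w s²/2} dw ). Then for every s ∈ ℝ, lim_{t→∞} φ_t(s) = 1; i.e., the characteristic function of the resetting process converges pointwise to that of the distribution degenerate at the resetting point 0. -/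
open MeasureTheory Filter

/-- For power-law resetting intensity `r(t) = r·(t+1)^p` with `p > 0`, the
characteristic function
`φ_t(s) = e^{-R(t) - t·s²/2}·(1 + ∫₀ᵗ r(w)·e^{R(w) + w·s²/2} dw)` converges
pointwise to `1` as `t → ∞`: convergence in distribution to the point mass at
the resetting point `0`. -/
theorem charfun_power_law_degenerate (r p : ℝ) (hr : 0 < r) (hp : 0 < p)
    (rint R : ℝ → ℝ) (φ : ℝ → ℝ → ℝ)
    (hrint : ∀ t, rint t = r * (t + 1) ^ p)
    (hR : ∀ t, R t = r / (p + 1) * ((t + 1) ^ (p + 1) - 1))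
    (hφ : ∀ t s, φ t s = Real.exp (-R t - t * s ^ 2 / 2) *
      (1 + ∫ w in (0 : ℝ)..t, rint w * Real.exp (R w + w * s ^ 2 / 2))) :
    ∀ s : ℝ, Tendsto (fun t => φ t s) atTop (nhds 1) := by
  intro s
  obtain ⟨c, hc⟩ : ∃ c : ℝ, c = s ^ 2 / 2 := ⟨_, rfl⟩
  have hc0 : 0 ≤ c := by rw [hc]; positivity
  have hp1 : 0 < p + 1 := by linarith
  obtain ⟨G, hG⟩ : ∃ G : ℝ → ℝ, ∀ w, G w = R w + w * c := ⟨_, fun _ => rfl⟩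
  have hrc : Continuous rint := by
    have : rint = fun t => r * (t + 1) ^ p := funext hrint
    rw [this]
    exact continuous_const.mul
      ((continuous_id.add continuous_const).rpow_const (fun _ => Or.inr hp.le))
  have hGd : ∀ w, HasDerivAt G (rint w + c) w := by
    intro w
    have hGe : G = fun w => r / (p + 1) * ((w + 1) ^ (p + 1) - 1) + w * c := by
      funext w; rw [hG, hR]
    rw [hGe]
    have h1 : HasDerivAt (fun w : ℝ => w + 1) 1 w := (hasDerivAt_id w).add_const 1
    have h2 := h1.rpow_const (p := p + 1) (Or.inr (by linarith))
    have h3 := ((h2.sub_const 1).const_mul (r / (p + 1))).add ((hasDerivAt_id w).mul_const c)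
    refine h3.congr_deriv ?_
    rw [hrint, show p + 1 - 1 = p by ring]
    field_simp
  have hGc : Continuous G := continuous_iff_continuousAt.2 fun w => (hGd w).continuousAt
  have hec : Continuous fun w => Real.exp (G w) := Real.continuous_exp.comp hGc
  have hG0 : G 0 = 0 := by rw [hG, hR]; simp
  have key : ∀ t, φ t s = 1 - c * ∫ w in (0:ℝ)..t, Real.exp (G w - G t) := by
    intro t
    have e1 : (∫ w in (0:ℝ)..t, Real.exp (G w) * (rint w + c)) = Real.exp (G t) - 1 := by
      rw [intervalIntegral.integral_eq_sub_of_hasDerivAt (f := fun w => Real.exp (G w))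
        (fun w _ => (hGd w).exp)
        ((hec.mul (hrc.add continuous_const)).intervalIntegrable _ _), hG0, Real.exp_zero]
    have e2 : (∫ w in (0:ℝ)..t, Real.exp (G w) * (rint w + c))
        = (∫ w in (0:ℝ)..t, rint w * Real.exp (G w)) + c * ∫ w in (0:ℝ)..t, Real.exp (G w) := by
      rw [← intervalIntegral.integral_const_mul, ← intervalIntegral.integral_add
        (f := fun w => rint w * Real.exp (G w)) (g := fun w => c * Real.exp (G w))
        ((hrc.mul hec).intervalIntegrable _ _)
        ((continuous_const.mul hec).intervalIntegrable _ _)]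
      congr 1; funext w; ring
    have e3 : (∫ w in (0:ℝ)..t, Real.exp (G w - G t))
        = Real.exp (-G t) * ∫ w in (0:ℝ)..t, Real.exp (G w) := by
      rw [← intervalIntegral.integral_const_mul]
      congr 1; funext w; rw [← Real.exp_add]; congr 1; ring
    have e4 : (∫ w in (0:ℝ)..t, rint w * Real.exp (R w + w * s ^ 2 / 2))
        = ∫ w in (0:ℝ)..t, rint w * Real.exp (G w) := by
      congr 1; funext w; rw [hG, hc]; congr 2; ring
    have e5 : Real.exp (-R t - t * s ^ 2 / 2) = Real.exp (-G t) := by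
      rw [hG, hc]; congr 1; ring
    have e6 : Real.exp (-G t) * Real.exp (G t) = 1 := by
      rw [← Real.exp_add]; simp
    rw [hφ, e4, e5, e3]
    have e7 : (∫ w in (0:ℝ)..t, rint w * Real.exp (G w))
        = Real.exp (G t) - 1 - c * ∫ w in (0:ℝ)..t, Real.exp (G w) := by linarith
    rw [e7]
    linear_combination e6
  have bound : ∀ t, 0 ≤ t →
      (∫ w in (0:ℝ)..t, Real.exp (G w - G t)) ≤ (r / (p + 1) * (t + 1) ^ p)⁻¹ := by
    intro t ht
    obtain ⟨k, hk⟩ : ∃ k : ℝ, k = r / (p + 1) * (t + 1) ^ p := ⟨_, rfl⟩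
    have hk0 : 0 < k := by
      rw [hk]; have : 0 < (t + 1) ^ p := Real.rpow_pos_of_pos (by linarith) _
      positivity
    rw [← hk]
    have h1 : (∫ w in (0:ℝ)..t, Real.exp (G w - G t))
        ≤ ∫ w in (0:ℝ)..t, Real.exp (k * w - k * t) := by
      refine intervalIntegral.integral_mono_on ht
        (Continuous.intervalIntegrable (by fun_prop) _ _)
        (Continuous.intervalIntegrable (by fun_prop) _ _) ?_
      intro w hw
      apply Real.exp_le_exp.2
      have a1 : (t + 1) ^ (p + 1) = (t + 1) ^ p * (t + 1) :=
        Real.rpow_add_one (by linarith) _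
      have a2 : (w + 1) ^ (p + 1) = (w + 1) ^ p * (w + 1) :=
        Real.rpow_add_one (by linarith [hw.1]) _
      have a3 : (w + 1) ^ p ≤ (t + 1) ^ p :=
        Real.rpow_le_rpow (by linarith [hw.1]) (by linarith [hw.2]) hp.le
      have a4 : (w + 1) ^ p * (w + 1) ≤ (t + 1) ^ p * (w + 1) :=
        mul_le_mul_of_nonneg_right a3 (by linarith [hw.1])
      have a5 := mul_le_mul_of_nonneg_left a4 (show 0 ≤ r / (p + 1) by positivity)
      have a6 : w * c ≤ t * c := mul_le_mul_of_nonneg_right hw.2 hc0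
      rw [hG, hG, hR, hR, a1, a2, hk]
      linarith
    have h2 : (∫ w in (0:ℝ)..t, Real.exp (k * w - k * t)) = k⁻¹ * (1 - Real.exp (-(k * t))) := by
      rw [intervalIntegral.integral_eq_sub_of_hasDerivAt
        (f := fun w => k⁻¹ * Real.exp (k * w - k * t))
        (f' := fun w => Real.exp (k * w - k * t))]
      · simp; ring
      · intro w _
        have := ((((hasDerivAt_id w).const_mul k).sub_const (k * t)).exp).const_mul k⁻¹
        refine this.congr_deriv ?_
        simp only [id]
        field_simp
      · exact Continuous.intervalIntegrable (by fun_prop) _ _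
    rw [h2] at h1
    have h3 : 0 ≤ k⁻¹ * Real.exp (-(k * t)) := by positivity
    linarith
  have hlim : Tendsto (fun t : ℝ => (r / (p + 1) * (t + 1) ^ p)⁻¹) atTop (nhds 0) := by
    apply Tendsto.inv_tendsto_atTop
    apply Tendsto.const_mul_atTop (by positivity)
    exact (tendsto_rpow_atTop hp).comp (tendsto_atTop_add_const_right _ 1 tendsto_id)
  have hI : Tendsto (fun t => ∫ w in (0:ℝ)..t, Real.exp (G w - G t)) atTop (nhds 0) := by
    refine tendsto_of_tendsto_of_tendsto_of_le_of_le' tendsto_const_nhds hlim ?_ ?_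
    · filter_upwards [eventually_ge_atTop 0] with t ht
      exact intervalIntegral.integral_nonneg ht fun w _ => (Real.exp_pos _).le
    · filter_upwards [eventually_ge_atTop 0] with t ht using bound t ht
  have hfin := (hI.const_mul c).const_sub 1
  simp only [mul_zero, sub_zero] at hfin
  simpa only [key] using hfin
end

section
/- Let r > 0 and p ∈ (−1, 0), set r(t) = r·(t+1)^p and R(t) = (r/(p+1))·((t+1)^{p+1} − 1), and define φ_t(s) = e^{−R(t) − t s²/2}·( 1 + ∫_0^t r(w)·e^{R(w) + w s²/2} dw ). Then for every s ∈ ℝ, lim_{t→∞} φ_t(s)·( 1 + s²/(2·r·(t+1)^p) ) = 1; i.e., the distribution of the resetting process is asymptotically Laplace with time-dependent scale (2·r·(t+1)^p)^{−1/2}. -/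
open MeasureTheory Filter

lemma aux_R (r p : ℝ) (hp₁ : -1 < p) (t : ℝ) (ht : -1 < t) :
    HasDerivAt (fun t : ℝ => r / (p + 1) * ((t + 1) ^ (p + 1) - 1)) (r * (t + 1) ^ p) t := by
  have h0 : HasDerivAt (fun t : ℝ => t + 1) 1 t := (hasDerivAt_id t).add_const 1
  have h1 := ((h0.rpow_const (p := p + 1) (Or.inl (by linarith))).sub_const 1).const_mul (r / (p + 1))
  have hp : p + 1 ≠ 0 := by linarith
  refine h1.congr_deriv ?_
  rw [add_sub_cancel_right]
  field_simp

lemma aux_h (r p a : ℝ) (hr : 0 < r) (ha : 0 ≤ a) (t : ℝ) (ht : -1 < t) :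
    HasDerivAt (fun t : ℝ => r * (t + 1) ^ p / (r * (t + 1) ^ p + a))
      (a * r * p * (t + 1) ^ (p - 1) / (r * (t + 1) ^ p + a) ^ 2) t := by
  have h0 : HasDerivAt (fun t : ℝ => t + 1) 1 t := (hasDerivAt_id t).add_const 1
  have h1 := (h0.rpow_const (p := p) (Or.inl (by linarith))).const_mul r
  have hu : 0 < (t + 1) ^ p := Real.rpow_pos_of_pos (by linarith) _
  have hne : r * (t + 1) ^ p + a ≠ 0 := by positivity
  refine (h1.div (h1.add_const a) hne).congr_deriv ?_
  ring

lemma aux_I (f : ℝ → ℝ) (hf : ContinuousOn f (Set.Ioi (-1))) (t : ℝ) (ht : -1 < t) :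
    HasDerivAt (fun t : ℝ => 1 + ∫ w in (0 : ℝ)..t, f w) (f t) t := by
  have hmem : Set.Ioi (-1 : ℝ) ∈ nhds t := Ioi_mem_nhds ht
  have h := intervalIntegral.integral_hasDerivAt_right (a := 0) (b := t) (f := f)
    ((hf.mono (fun x hx => by
      rw [Set.mem_uIcc] at hx
      rcases hx with hx | hx <;> simp only [Set.mem_Ioi] <;> linarith [hx.1])).intervalIntegrable)
    (hf.stronglyMeasurableAtFilter isOpen_Ioi t ht) (hf.continuousAt hmem)
  exact h.const_add 1

lemma aux_main (I F : ℝ → ℝ) (I' F' : ℝ → ℝ)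
    (hI : ∀ t, 0 ≤ t → HasDerivAt I (I' t) t) (hF : ∀ t, 0 ≤ t → HasDerivAt F (F' t) t)
    (hFpos : ∀ t, 0 ≤ t → 0 < F t) (h0 : F 0 ≤ I 0) (hle : ∀ t, 0 ≤ t → F' t ≤ I' t)
    (hev : ∀ ε > 0, ∃ T ≥ 0, ∀ t ≥ T, I' t ≤ (1 + ε) * F' t)
    (hlim : Tendsto (fun t => (F t)⁻¹) atTop (nhds 0)) :
    Tendsto (fun t => I t * (F t)⁻¹) atTop (nhds 1) := by
  have mono : ∀ (B B' : ℝ → ℝ) (T : ℝ), (∀ t ≥ T, HasDerivAt B (B' t) t) →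
      (∀ t ≥ T, 0 ≤ B' t) → ∀ t ≥ T, B T ≤ B t := by
    intro B B' T h1 h2 t ht
    have : MonotoneOn B (Set.Ici T) := by
      apply monotoneOn_of_hasDerivWithinAt_nonneg (f' := B') (convex_Ici T)
      · exact fun x hx => (h1 x hx).continuousAt.continuousWithinAt
      · intro x hx
        exact (h1 x (interior_subset hx)).hasDerivWithinAt
      · intro x hx
        exact h2 x (interior_subset hx)
    exact this Set.self_mem_Ici ht ht
  rw [Metric.tendsto_atTop']
  intro ε hε
  obtain ⟨T, hT, hTe⟩ := hev (ε / 2) (by positivity)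
  set C := (1 + ε / 2) * F T - I T with hC
  have hl2 : Tendsto (fun t => (-C) * (F t)⁻¹) atTop (nhds 0) := by
    simpa using hlim.const_mul (-C)
  have hev2 := hl2.eventually (gt_mem_nhds (show (0:ℝ) < ε / 2 by positivity))
  obtain ⟨N, hN⟩ := eventually_atTop.1 hev2
  refine ⟨max N T, fun t ht => ?_⟩
  have htN : N ≤ t := (le_max_left _ _).trans ht.le
  have htT : T ≤ t := (le_max_right _ _).trans ht.le
  have ht0 : 0 ≤ t := hT.trans htT
  have hlow := mono (fun t => I t - F t) (fun t => I' t - F' t) 0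
    (fun t ht => (hI t ht).sub (hF t ht)) (fun t ht => by linarith [hle t ht]) t ht0
  have hup := mono (fun t => (1 + ε / 2) * F t - I t) (fun t => (1 + ε / 2) * F' t - I' t) T
    (fun t ht => ((hF t (hT.trans ht)).const_mul _).sub (hI t (hT.trans ht)))
    (fun t ht => by linarith [hTe t ht]) t htT
  have hp := hFpos t ht0
  have hinv : 0 < (F t)⁻¹ := inv_pos.2 hp
  have hmul : F t * (F t)⁻¹ = 1 := mul_inv_cancel₀ hp.ne'
  have e1 : F t * (F t)⁻¹ ≤ I t * (F t)⁻¹ := mul_le_mul_of_nonneg_right (by linarith) hinv.le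
  have e2 : I t * (F t)⁻¹ ≤ ((1 + ε / 2) * F t - C) * (F t)⁻¹ :=
    mul_le_mul_of_nonneg_right (by linarith) hinv.le
  have e3 : ((1 + ε / 2) * F t - C) * (F t)⁻¹ = (1 + ε / 2) + (-C) * (F t)⁻¹ := by
    linear_combination (1 + ε / 2) * hmul
  have e4 := hN t htN
  rw [Real.dist_eq, abs_lt]
  constructor <;> linarith

lemma aux_lim (a b : ℝ) (ha : 0 < a) :
    Tendsto (fun t : ℝ => Real.exp (-(a * t)) * (1 + b * (t + 1))) atTop (nhds 0) := by
  have hat : Tendsto (fun t : ℝ => a * t) atTop atTop := tendsto_id.const_mul_atTop ha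
  have h1 := (Real.tendsto_pow_mul_exp_neg_atTop_nhds_zero 1).comp hat
  have h0 := (Real.tendsto_pow_mul_exp_neg_atTop_nhds_zero 0).comp hat
  have h := (h0.const_mul (1 + b)).add (h1.const_mul (b / a))
  simp only [mul_zero, add_zero] at h
  refine h.congr fun t => ?_
  simp only [Function.comp, pow_zero, pow_one]
  field_simp
  ring

/-- For power-law resetting intensity `r(t) = r·(t+1)^p` with `p ∈ (-1,0)`, the
characteristic function
`φ_t(s) = e^{-R(t) - t·s²/2}·(1 + ∫₀ᵗ r(w)·e^{R(w) + w·s²/2} dw)` satisfies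
`φ_t(s)·(1 + s²/(2·r·(t+1)^p)) → 1` as `t → ∞`: the distribution is
asymptotically Laplace with time-dependent scale `(2·r·(t+1)^p)^{-1/2}`. -/
theorem charfun_power_law_asymp_laplace (r p : ℝ) (hr : 0 < r)
    (hp₁ : -1 < p) (hp₂ : p < 0)
    (rint R : ℝ → ℝ) (φ : ℝ → ℝ → ℝ)
    (hrint : ∀ t, rint t = r * (t + 1) ^ p)
    (hR : ∀ t, R t = r / (p + 1) * ((t + 1) ^ (p + 1) - 1))
    (hφ : ∀ t s, φ t s = Real.exp (-R t - t * s ^ 2 / 2) *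
      (1 + ∫ w in (0 : ℝ)..t, rint w * Real.exp (R w + w * s ^ 2 / 2))) :
    ∀ s : ℝ,
      Tendsto (fun t => φ t s * (1 + s ^ 2 / (2 * r * (t + 1) ^ p))) atTop (nhds 1) := by
  intro s
  have hRd : ∀ t, -1 < t → HasDerivAt R (r * (t + 1) ^ p) t := by
    intro t ht
    rw [show R = fun t : ℝ => r / (p + 1) * ((t + 1) ^ (p + 1) - 1) from funext hR]
    exact aux_R r p hp₁ t ht
  have hR0 : R 0 = 0 := by rw [hR]; simp
  have hRnn : ∀ t, 0 ≤ t → 0 ≤ R t := by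
    intro t ht
    rw [hR]
    have : 1 ≤ (t + 1) ^ (p + 1) := Real.one_le_rpow (by linarith) (by linarith)
    have h2 : 0 < p + 1 := by linarith
    exact mul_nonneg (by positivity) (by linarith)
  have hu : ∀ t : ℝ, -1 < t → 0 < (t + 1) ^ p := fun t ht =>
    Real.rpow_pos_of_pos (by linarith) _
  obtain ⟨a, ha⟩ : ∃ a, a = s ^ 2 / 2 := ⟨_, rfl⟩
  have ha0 : 0 ≤ a := by rw [ha]; positivity
  have hEd : ∀ t, -1 < t → HasDerivAt (fun t => Real.exp (R t + t * s ^ 2 / 2))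
      (Real.exp (R t + t * s ^ 2 / 2) * (r * (t + 1) ^ p + a)) t := by
    intro t ht
    have h1 : HasDerivAt (fun t : ℝ => t * s ^ 2 / 2) a t := by
      refine (((hasDerivAt_id t).mul_const (s ^ 2)).div_const 2).congr_deriv ?_
      rw [ha]; ring
    exact ((hRd t ht).add h1).exp
  have hcont : ContinuousOn (fun w => rint w * Real.exp (R w + w * s ^ 2 / 2))
      (Set.Ioi (-1)) := by
    intro t ht
    have ht' : -1 < t := ht
    refine (ContinuousAt.mul ?_ (hEd t ht).continuousAt).continuousWithinAt
    rw [show rint = fun t : ℝ => r * (t + 1) ^ p from funext hrint]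
    exact continuousAt_const.mul
      ((continuousAt_id.add continuousAt_const).rpow_const (Or.inl (by simp; linarith)))
  have hId := fun t ht => aux_I _ hcont t ht
  set I : ℝ → ℝ := fun t => 1 + ∫ w in (0 : ℝ)..t, rint w * Real.exp (R w + w * s ^ 2 / 2)
    with hIdef
  have hI0 : I 0 = 1 := by simp [hIdef]
  set F : ℝ → ℝ := fun t => Real.exp (R t + t * s ^ 2 / 2) *
    (r * (t + 1) ^ p / (r * (t + 1) ^ p + a)) with hFdef
  have hFd : ∀ t, -1 < t → HasDerivAt F (Real.exp (R t + t * s ^ 2 / 2) *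
      (r * (t + 1) ^ p + a * r * p * (t + 1) ^ (p - 1) / (r * (t + 1) ^ p + a) ^ 2)) t := by
    intro t ht
    have hup := hu t ht
    refine ((hEd t ht).mul (aux_h r p a hr ha0 t ht)).congr_deriv ?_
    have : r * (t + 1) ^ p + a ≠ 0 := by positivity
    field_simp
  have hFinv : ∀ t, -1 < t → (F t)⁻¹ = Real.exp (-R t - t * s ^ 2 / 2) *
      (1 + s ^ 2 / (2 * r * (t + 1) ^ p)) := by
    intro t ht
    have hup := hu t ht
    have h1 : -R t - t * s ^ 2 / 2 = -(R t + t * s ^ 2 / 2) := by ring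
    rw [h1, Real.exp_neg]
    simp only [hFdef]
    rw [mul_inv]
    congr 1
    rw [ha]
    field_simp
  have key : Tendsto (fun t => I t * (F t)⁻¹) atTop (nhds 1) := by
    rcases ha0.eq_or_lt with h | hapos
    · have hs : s ^ 2 = 0 := by linarith
      have : ∀ t ≥ 0, I t * (F t)⁻¹ = 1 := by
        intro t ht
        have hFI : I t = F t := by
          have hF0 : F 0 = 1 := by simp [hFdef, hR0, ← h, hr.ne']
          have hz : ∀ x ∈ Set.Ici (0:ℝ), HasDerivWithinAt (fun t => I t - F t) 0 (Set.Ici 0) x := by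
            intro x hx
            have hx' : (0:ℝ) ≤ x := hx
            refine (((hId x (by linarith)).sub (hFd x (by linarith))).congr_deriv ?_).hasDerivWithinAt
            rw [← h, hrint]; ring
          have hc := (convex_Ici (0:ℝ)).norm_image_sub_le_of_norm_hasDerivWithin_le (C := 0)
            hz (by simp) Set.self_mem_Ici (show t ∈ Set.Ici (0:ℝ) from ht)
          simp only [hF0, hI0, zero_mul, sub_self, sub_zero] at hc
          have := norm_le_zero_iff.1 hc
          linarith
        have hup := hu t (by linarith)
        have : F t ≠ 0 := by simp only [hFdef]; positivity
        rw [hFI, mul_inv_cancel₀ this]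
      exact tendsto_const_nhds.congr' (by
        filter_upwards [eventually_ge_atTop 0] with t ht
        exact (this t ht).symm)
    · apply aux_main I F _ _ (fun t ht => hId t (by linarith)) (fun t ht => hFd t (by linarith))
      · intro t ht
        have hup := hu t (by linarith)
        simp only [hFdef]; positivity
      · rw [hI0]
        simp only [hFdef, hR0]
        simp only [zero_mul, zero_div, add_zero, Real.exp_zero, zero_add, Real.one_rpow, mul_one, one_mul]
        rw [div_le_one (by positivity)]; linarith
      · intro t ht
        have hup := hu t (by linarith)
        have hup1 : 0 < (t + 1) ^ (p - 1) := Real.rpow_pos_of_pos (by linarith) _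
        rw [hrint, mul_comm (r * (t + 1) ^ p)]
        apply mul_le_mul_of_nonneg_left _ (Real.exp_pos _).le
        have : a * r * p * (t + 1) ^ (p - 1) / (r * (t + 1) ^ p + a) ^ 2 ≤ 0 := by
          apply div_nonpos_of_nonpos_of_nonneg _ (by positivity)
          have : a * r * p * (t + 1) ^ (p - 1) = -((a * r * (t + 1) ^ (p - 1)) * (-p)) := by ring
          rw [this]
          have h3 : 0 < -p := by linarith
          have : 0 < (a * r * (t + 1) ^ (p - 1)) * (-p) := by positivity
          linarith
        linarith
      · intro ε hε
        refine ⟨(1 + ε) / (ε * a), by positivity, fun t ht => ?_⟩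
        have ht0 : 0 ≤ t := le_trans (by positivity) ht
        have hup := hu t (by linarith)
        have hup1 : 0 < (t + 1) ^ (p - 1) := Real.rpow_pos_of_pos (by linarith) _
        have hrel : (t + 1) ^ p = (t + 1) ^ (p - 1) * (t + 1) := by
          rw [← Real.rpow_add_one (by linarith)]; ring_nf
        rw [hrint, mul_comm (r * (t + 1) ^ p), mul_left_comm (1 + ε)]
        apply mul_le_mul_of_nonneg_left _ (Real.exp_pos _).le
        have hb : a * r * (-p) * (t + 1) ^ (p - 1) / (r * (t + 1) ^ p + a) ^ 2
            ≤ r * (t + 1) ^ (p - 1) / a := by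
          rw [div_le_div_iff₀ (by positivity) hapos]
          have q1 : a ^ 2 ≤ (r * (t + 1) ^ p + a) ^ 2 := by
            apply pow_le_pow_left₀ ha0
            have : 0 < r * (t + 1) ^ p := by positivity
            linarith
          have q2 : 0 < r * (t + 1) ^ (p - 1) := by positivity
          calc a * r * (-p) * (t + 1) ^ (p - 1) * a
              = (r * (t + 1) ^ (p - 1)) * (a ^ 2 * (-p)) := by ring
            _ ≤ (r * (t + 1) ^ (p - 1)) * (r * (t + 1) ^ p + a) ^ 2 := by
              apply mul_le_mul_of_nonneg_left _ q2.le
              nlinarith [sq_nonneg a]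
        have hb2 : (1 + ε) * (r * (t + 1) ^ (p - 1) / a) ≤ ε * (r * (t + 1) ^ p) := by
          rw [hrel]
          have q3 : (1 + ε) / a ≤ ε * (t + 1) := by
            rw [ge_iff_le, div_le_iff₀ (by positivity)] at ht
            rw [div_le_iff₀ hapos]
            nlinarith [mul_pos hε hapos]
          have q2 : 0 < r * (t + 1) ^ (p - 1) := by positivity
          have := mul_le_mul_of_nonneg_left q3 q2.le
          calc _ = r * (t + 1) ^ (p - 1) * ((1 + ε) / a) := by ring
            _ ≤ _ := this
            _ = _ := by ring
        have hneg : a * r * p * (t + 1) ^ (p - 1) / (r * (t + 1) ^ p + a) ^ 2 =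
          -(a * r * (-p) * (t + 1) ^ (p - 1) / (r * (t + 1) ^ p + a) ^ 2) := by ring
        rw [hneg]
        have hb3 := mul_le_mul_of_nonneg_left hb (show 0 ≤ 1 + ε by linarith)
        linarith
      · refine tendsto_of_tendsto_of_tendsto_of_le_of_le' tendsto_const_nhds
          (aux_lim a (a / r) hapos) ?_ ?_
        · filter_upwards [eventually_ge_atTop 0] with t ht
          have hup := hu t (by linarith)
          simp only [hFdef]; positivity
        · filter_upwards [eventually_ge_atTop 0] with t ht
          have hup := hu t (by linarith)
          rw [hFinv t (by linarith)]
          have hR1 := hRnn t ht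
          apply mul_le_mul _ _ (by positivity) (Real.exp_pos _).le
          · apply Real.exp_le_exp.2
            rw [ha]; linarith
          · have h1 : ((t + 1) ^ p)⁻¹ ≤ t + 1 := by
              rw [← Real.rpow_neg (by linarith)]
              calc (t + 1) ^ (-p) ≤ (t + 1) ^ (1:ℝ) :=
                    Real.rpow_le_rpow_of_exponent_le (by linarith) (by linarith)
                _ = t + 1 := Real.rpow_one _
            have h2 : s ^ 2 / (2 * r * (t + 1) ^ p) = a / r * ((t + 1) ^ p)⁻¹ := by
              rw [ha]; field_simp
            rw [h2]
            have := mul_le_mul_of_nonneg_left h1 (show 0 ≤ a / r by positivity)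
            linarith
  refine key.congr' ?_
  filter_upwards [eventually_ge_atTop 0] with t ht
  rw [hFinv t (by linarith), hφ]
  simp only [hIdef]
  ring
end
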